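/- arXiv:1705.01433 — 2 statements merged into one kernel-verified Lean document; each statement's English description precedes it below -/
import Mathlib

section
/- Consider a mean-payoff bidding game G = (V, E, w) and a vertex v ∈ V. If Min's initial budget exceeds Thresh(v), then Min has a memoryless strategy that guarantees a nonpositive mean-payoff value from v, that is, a strategy whose bid and chosen move at each round depend only on the current vertex, Min's current budget, and the current energy level. -/
open scoped Classical

/-! ### Bidding games: the basic model -/

/-- One round of a bidding game: the vertex the token was moved to, the winning bid,
and whether Player 1 won the bidding. -/
structure BidRound (V : Type) where
  dest : V
  bid : ℝ
  p1Won : Bool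

/-- A history: the initial vertex together with the list of rounds played so far. -/
structure Hist (V : Type) where
  init : V
  rounds : List (BidRound V)

/-- The vertex currently occupied by the token. -/
def Hist.cur {V : Type} (h : Hist V) : V :=
  h.rounds.getLast?.elim h.init BidRound.dest

/-- The net payment of Player 1 so far (bids paid upon winning minus bids received). -/
def Hist.pay1 {V : Type} (h : Hist V) : ℝ :=
  (h.rounds.map (fun r => if r.p1Won then r.bid else -r.bid)).sum

/-- The net payment of Player 2 so far. -/
def Hist.pay2 {V : Type} (h : Hist V) : ℝ := -h.pay1

/-- The sum of the weights of all vertices visited so far (including the current one). -/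
def Hist.energyAll {V : Type} (w : V → ℤ) (h : Hist V) : ℤ :=
  w h.init + (h.rounds.map (fun r => w r.dest)).sum

/-- A strategy: maps a history to a bid and the vertex to move to upon winning. -/
def Strat (V : Type) := Hist V → ℝ × V

/-- A tie-breaking mechanism: decides at each history whether Player 1 wins a tie. -/
def TieBreak (V : Type) := Hist V → Bool

/-- A bidding game: a finite directed graph in which every vertex has an outgoing edge. -/
structure BiddingGame (V : Type) [Fintype V] where
  E : V → V → Prop
  total : ∀ v, ∃ u, E v u

/-- One round of play: both players bid; the higher bidder (Player 1 upon a tie won by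
the tie-breaking mechanism) pays his bid to the other player and moves the token. -/
noncomputable def extend {V : Type} (tb : TieBreak V) (f1 f2 : Strat V) (h : Hist V) : Hist V :=
  if (f2 h).1 < (f1 h).1 ∨ ((f1 h).1 = (f2 h).1 ∧ tb h = true) then
    ⟨h.init, h.rounds ++ [⟨(f1 h).2, (f1 h).1, true⟩]⟩
  else
    ⟨h.init, h.rounds ++ [⟨(f2 h).2, (f2 h).1, false⟩]⟩

/-- The history after `n` rounds, starting at `v0`. -/
noncomputable def play {V : Type} (tb : TieBreak V) (f1 f2 : Strat V) (v0 : V) : ℕ → Hist V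
  | 0 => ⟨v0, []⟩
  | n + 1 => extend tb f1 f2 (play tb f1 f2 v0 n)

/-- The vertex occupied after `n` rounds. -/
noncomputable def visit {V : Type} (tb : TieBreak V) (f1 f2 : Strat V) (v0 : V) (n : ℕ) : V :=
  (play tb f1 f2 v0 n).cur

/-- The energy (sum of weights) of the prefix of length `n` of the outcome. -/
noncomputable def energy {V : Type} (w : V → ℤ) (tb : TieBreak V) (f1 f2 : Strat V) (v0 : V)
    (n : ℕ) : ℤ :=
  ∑ i ∈ Finset.range n, w (visit tb f1 f2 v0 i)

/-- Player 1's strategy is legal w.r.t. the initial budget `B`: along any play, his bids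
are nonnegative, never exceed his current budget, and his moves follow edges. -/
def Legal1 {V : Type} [Fintype V] (G : BiddingGame V) (f1 : Strat V) (B : ℝ) : Prop :=
  ∀ (tb : TieBreak V) (f2 : Strat V) (v0 : V) (n : ℕ),
    0 ≤ (f1 (play tb f1 f2 v0 n)).1 ∧
    (f1 (play tb f1 f2 v0 n)).1 ≤ B - (play tb f1 f2 v0 n).pay1 ∧
    G.E (play tb f1 f2 v0 n).cur (f1 (play tb f1 f2 v0 n)).2

/-- Player 2's strategy is legal w.r.t. the initial budget `B`. -/
def Legal2 {V : Type} [Fintype V] (G : BiddingGame V) (f2 : Strat V) (B : ℝ) : Prop :=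
  ∀ (tb : TieBreak V) (f1 : Strat V) (v0 : V) (n : ℕ),
    0 ≤ (f2 (play tb f1 f2 v0 n)).1 ∧
    (f2 (play tb f1 f2 v0 n)).1 ≤ B - (play tb f1 f2 v0 n).pay2 ∧
    G.E (play tb f1 f2 v0 n).cur (f2 (play tb f1 f2 v0 n)).2

/-- A memoryless strategy: its action depends only on the current vertex and the
player's current budget (equivalently, the net payments so far). -/
def Memoryless {V : Type} (f : Strat V) : Prop :=
  ∀ h h' : Hist V, h.cur = h'.cur → h.pay1 = h'.pay1 → f h = f h'

/-- A memoryless strategy in a mean-payoff game: its action depends only on the current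
vertex, the player's current budget, and the current energy level. -/
def MemorylessE {V : Type} (w : V → ℤ) (f : Strat V) : Prop :=
  ∀ h h' : Hist V, h.cur = h'.cur → h.pay1 = h'.pay1 →
    h.energyAll w = h'.energyAll w → f h = f h'

/-- A constant-memory strategy for Player 2 (Max): the action depends only on the current
vertex, Player 2's current budget, the current energy level, and a memory state ranging
over a finite set (of size independent of the history), updated round by round. -/
def FiniteMemory2 {V : Type} (w : V → ℤ) (f : Strat V) (B : ℝ) : Prop :=
  ∃ (M : Type) (_ : Fintype M) (m0 : M) (upd : M → BidRound V → M)
    (act : V → ℝ → ℤ → M → ℝ × V),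
    ∀ h : Hist V, f h = act h.cur (B - h.pay2) (h.energyAll w) (h.rounds.foldl upd m0)

/-- Strong connectivity of the arena. -/
def StronglyConnected {V : Type} [Fintype V] (G : BiddingGame V) : Prop :=
  ∀ v u : V, Relation.ReflTransGen G.E v u

/-! ### Richman games -/

/-- The successors of `v`. -/
noncomputable def BiddingGame.adj {V : Type} [Fintype V] (G : BiddingGame V) (v : V) :
    Finset V :=
  Finset.univ.filter (fun u => G.E v u)

lemma BiddingGame.adj_nonempty {V : Type} [Fintype V] (G : BiddingGame V) (v : V) :
    (G.adj v).Nonempty := by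
  obtain ⟨u, hu⟩ := G.total v
  exact ⟨u, by simpa [BiddingGame.adj] using hu⟩

/-- The Richman function `R(v, i)`. -/
noncomputable def Rfun {V : Type} [Fintype V] (G : BiddingGame V) (vR vS : V) :
    ℕ → V → ℝ
  | 0, v => if v = vR then 0 else 1
  | i + 1, v =>
      if v = vR then 0
      else if v = vS then 1
      else ((G.adj v).sup' (G.adj_nonempty v) (Rfun G vR vS i) +
            (G.adj v).inf' (G.adj_nonempty v) (Rfun G vR vS i)) / 2

/-- The limit Richman function `R(v) = lim_i R(v, i)`; since `i ↦ R(v, i)` is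
nonincreasing, the limit equals the infimum. -/
noncomputable def Rlim {V : Type} [Fintype V] (G : BiddingGame V) (vR vS : V)
    (v : V) : ℝ :=
  ⨅ i : ℕ, Rfun G vR vS i v

/-- Player 1 wins an outcome of a Richman game: `vR` is reached, and `vS` is not
reached before that (the game ends once a target is reached). -/
def Win1Richman {V : Type} (tb : TieBreak V) (f1 f2 : Strat V) (v0 vR vS : V) : Prop :=
  ∃ n, visit tb f1 f2 v0 n = vR ∧ ∀ m < n, visit tb f1 f2 v0 m ≠ vS

/-- Player 2 wins an outcome of a Richman game: `vS` is reached first, or no target is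
ever reached. -/
def Win2Richman {V : Type} (tb : TieBreak V) (f1 f2 : Strat V) (v0 vR vS : V) : Prop :=
  (∃ n, visit tb f1 f2 v0 n = vS ∧ ∀ m < n, visit tb f1 f2 v0 m ≠ vR) ∨
  (∀ n, visit tb f1 f2 v0 n ≠ vR ∧ visit tb f1 f2 v0 n ≠ vS)

/-- Player 1 has a winning strategy in the Richman game from `v0` with budget `B`. -/
def Win1RichmanFrom {V : Type} [Fintype V] (G : BiddingGame V) (vR vS v0 : V)
    (B : ℝ) : Prop :=
  ∀ tb : TieBreak V, ∃ f1 : Strat V, Legal1 G f1 B ∧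
    ∀ f2 : Strat V, Legal2 G f2 (1 - B) → Win1Richman tb f1 f2 v0 vR vS

/-- Player 2 has a winning strategy in the Richman game from `v0` with budget `B`. -/
def Win2RichmanFrom {V : Type} [Fintype V] (G : BiddingGame V) (vR vS v0 : V)
    (B : ℝ) : Prop :=
  ∀ tb : TieBreak V, ∃ f2 : Strat V, Legal2 G f2 B ∧
    ∀ f1 : Strat V, Legal1 G f1 (1 - B) → Win2Richman tb f1 f2 v0 vR vS

/-- `t` is a threshold budget at `v` in the Richman game. -/
def IsThreshRichman {V : Type} [Fintype V] (G : BiddingGame V) (vR vS v : V)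
    (t : ℝ) : Prop :=
  (∀ B : ℝ, B ≤ 1 → t < B → Win1RichmanFrom G vR vS v B) ∧
  (∀ B : ℝ, B ≤ 1 → 1 - t < B → Win2RichmanFrom G vR vS v B)

/-! ### Richman games with target sets -/

def Win1RichmanSet {V : Type} (tb : TieBreak V) (f1 f2 : Strat V) (v0 : V)
    (R S : Set V) : Prop :=
  ∃ n, visit tb f1 f2 v0 n ∈ R ∧ ∀ m < n, visit tb f1 f2 v0 m ∉ S

def Win2RichmanSet {V : Type} (tb : TieBreak V) (f1 f2 : Strat V) (v0 : V)
    (R S : Set V) : Prop :=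
  (∃ n, visit tb f1 f2 v0 n ∈ S ∧ ∀ m < n, visit tb f1 f2 v0 m ∉ R) ∨
  (∀ n, visit tb f1 f2 v0 n ∉ R ∧ visit tb f1 f2 v0 n ∉ S)

/-- `t` is a threshold budget at `v` in the Richman game with target sets `R` and `S`. -/
def IsThreshRichmanSet {V : Type} [Fintype V] (G : BiddingGame V) (R S : Set V)
    (v : V) (t : ℝ) : Prop :=
  (∀ B : ℝ, B ≤ 1 → t < B → ∀ tb : TieBreak V, ∃ f1 : Strat V, Legal1 G f1 B ∧
      ∀ f2 : Strat V, Legal2 G f2 (1 - B) → Win1RichmanSet tb f1 f2 v R S) ∧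
  (∀ B : ℝ, B ≤ 1 → 1 - t < B → ∀ tb : TieBreak V, ∃ f2 : Strat V, Legal2 G f2 B ∧
      ∀ f1 : Strat V, Legal1 G f1 (1 - B) → Win2RichmanSet tb f1 f2 v R S)

/-! ### Reachability games -/

/-- `t` is a threshold budget at `v` in the reachability game with target set `T`. -/
def IsThreshReach {V : Type} [Fintype V] (G : BiddingGame V) (T : Set V) (v : V)
    (t : ℝ) : Prop :=
  (∀ B : ℝ, B ≤ 1 → t < B → ∀ tb : TieBreak V, ∃ f1 : Strat V, Legal1 G f1 B ∧
      ∀ f2 : Strat V, Legal2 G f2 (1 - B) → ∃ n, visit tb f1 f2 v n ∈ T) ∧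
  (∀ B : ℝ, B ≤ 1 → 1 - t < B → ∀ tb : TieBreak V, ∃ f2 : Strat V, Legal2 G f2 B ∧
      ∀ f1 : Strat V, Legal1 G f1 (1 - B) → ∀ n, visit tb f1 f2 v n ∉ T)

/-! ### Parity games -/

/-- Player 1 wins an outcome of a parity game: the maximal parity index visited
infinitely often is odd. -/
def Win1Parity {V : Type} (p : V → ℕ) (tb : TieBreak V) (f1 f2 : Strat V)
    (v0 : V) : Prop :=
  Odd (sSup {k : ℕ | ∀ N : ℕ, ∃ n ≥ N, p (visit tb f1 f2 v0 n) = k})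

def Win1ParityFrom {V : Type} [Fintype V] (G : BiddingGame V) (p : V → ℕ) (v0 : V)
    (B : ℝ) : Prop :=
  ∀ tb : TieBreak V, ∃ f1 : Strat V, Legal1 G f1 B ∧
    ∀ f2 : Strat V, Legal2 G f2 (1 - B) → Win1Parity p tb f1 f2 v0

def Win2ParityFrom {V : Type} [Fintype V] (G : BiddingGame V) (p : V → ℕ) (v0 : V)
    (B : ℝ) : Prop :=
  ∀ tb : TieBreak V, ∃ f2 : Strat V, Legal2 G f2 B ∧
    ∀ f1 : Strat V, Legal1 G f1 (1 - B) → ¬ Win1Parity p tb f1 f2 v0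

/-- `t` is a threshold budget at `v` in the parity game. -/
def IsThreshParity {V : Type} [Fintype V] (G : BiddingGame V) (p : V → ℕ) (v : V)
    (t : ℝ) : Prop :=
  (∀ B : ℝ, B ≤ 1 → t < B → Win1ParityFrom G p v B) ∧
  (∀ B : ℝ, B ≤ 1 → 1 - t < B → Win2ParityFrom G p v B)

/-! ### Mean-payoff games (Min is Player 1, Max is Player 2) -/

/-- The mean-payoff value of the outcome. -/
noncomputable def mpval {V : Type} (w : V → ℤ) (tb : TieBreak V) (f1 f2 : Strat V)
    (v0 : V) : ℝ :=
  Filter.liminf (fun n : ℕ => (energy w tb f1 f2 v0 n : ℝ) / n) Filter.atTop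

/-- Min can guarantee a nonpositive mean-payoff value from `v0` with budget `B`. -/
def MinWinsFrom {V : Type} [Fintype V] (G : BiddingGame V) (w : V → ℤ) (v0 : V)
    (B : ℝ) : Prop :=
  ∀ tb : TieBreak V, ∃ f1 : Strat V, Legal1 G f1 B ∧
    ∀ f2 : Strat V, Legal2 G f2 (1 - B) → mpval w tb f1 f2 v0 ≤ 0

/-- Max can guarantee a strictly positive mean-payoff value from `v0` with budget `B`. -/
def MaxWinsFrom {V : Type} [Fintype V] (G : BiddingGame V) (w : V → ℤ) (v0 : V)
    (B : ℝ) : Prop :=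
  ∀ tb : TieBreak V, ∃ f2 : Strat V, Legal2 G f2 B ∧
    ∀ f1 : Strat V, Legal1 G f1 (1 - B) → 0 < mpval w tb f1 f2 v0

/-- `t` is a threshold budget at `v` in the mean-payoff game. -/
def IsThreshMP {V : Type} [Fintype V] (G : BiddingGame V) (w : V → ℤ) (v : V)
    (t : ℝ) : Prop :=
  (∀ B : ℝ, B ≤ 1 → t < B → MinWinsFrom G w v B) ∧
  (∀ B : ℝ, B ≤ 1 → 1 - t < B → MaxWinsFrom G w v B)

/-! ### The split graph `G^u` and the weighted Richman function -/

/-- Edges of `G^u`: `u` is split into `u_s = Sum.inl u` (keeping the outgoing edges of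
`u`, with no incoming edges) and `u_t = Sum.inr ()` (receiving the edges into `u`, with
no outgoing edges). -/
def splitE {V : Type} [Fintype V] (G : BiddingGame V) (u : V) :
    V ⊕ Unit → V ⊕ Unit → Prop
  | Sum.inl v, Sum.inl x => G.E v x ∧ x ≠ u
  | Sum.inl v, Sum.inr _ => G.E v u
  | Sum.inr _, _ => False

/-- The successors in `G^u` of a vertex `v ∈ V` (i.e. of `Sum.inl v`). -/
noncomputable def succu {V : Type} [Fintype V] (G : BiddingGame V) (u v : V) :
    Finset (V ⊕ Unit) :=
  Finset.univ.filter (fun y => splitE G u (Sum.inl v) y)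

lemma succu_nonempty {V : Type} [Fintype V] (G : BiddingGame V) (u v : V) :
    (succu G u v).Nonempty := by
  obtain ⟨x, hx⟩ := G.total v
  by_cases hxu : x = u
  · refine ⟨Sum.inr (), ?_⟩
    simp only [succu, Finset.mem_filter, Finset.mem_univ, true_and]
    exact show G.E v u from hxu ▸ hx
  · refine ⟨Sum.inl x, ?_⟩
    simp only [succu, Finset.mem_filter, Finset.mem_univ, true_and]
    exact show G.E v x ∧ x ≠ u from ⟨hx, hxu⟩

/-- `W(v⁺)`: the maximal value of `W` over the `G^u`-successors of `v`. -/
noncomputable def supWu {V : Type} [Fintype V] (G : BiddingGame V) (u : V)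
    (W : V ⊕ Unit → ℝ) (v : V) : ℝ :=
  (succu G u v).sup' (succu_nonempty G u v) W

/-- `W(v⁻)`: the minimal value of `W` over the `G^u`-successors of `v`. -/
noncomputable def infWu {V : Type} [Fintype V] (G : BiddingGame V) (u : V)
    (W : V ⊕ Unit → ℝ) (v : V) : ℝ :=
  (succu G u v).inf' (succu_nonempty G u v) W

/-- `W` is a weighted Richman function for the weights `w`, split at `u`:
`W(u_t) = 0` and `W(v) = (W(v⁺) + W(v⁻))/2 + w(v)` for every `v ∈ V`
(`Sum.inl v` represents `v`, in particular `Sum.inl u` is `u_s`). -/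
def IsWRichman {V : Type} [Fintype V] (G : BiddingGame V) (w : V → ℝ) (u : V)
    (W : V ⊕ Unit → ℝ) : Prop :=
  W (Sum.inr ()) = 0 ∧
  ∀ v : V, W (Sum.inl v) = (supWu G u W v + infWu G u W v) / 2 + w v

/-- Projection of `G^u`-vertices back to vertices of `G`. -/
def projU {V : Type} (u : V) : V ⊕ Unit → V := Sum.elim id (fun _ => u)

/-- `w_M`: the maximal absolute value of `W` over `V`. -/
noncomputable def wMax {V : Type} [Fintype V] (W : V ⊕ Unit → ℝ) (u : V) : ℝ :=
  Finset.univ.sup' ⟨u, Finset.mem_univ u⟩ (fun v : V => |W (Sum.inl v)|)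

/-- `b_M`: the maximal value of the bid `(W(v⁺) − W(v⁻))/2` over `V`. -/
noncomputable def bMax {V : Type} [Fintype V] (G : BiddingGame V) (u : V)
    (W : V ⊕ Unit → ℝ) : ℝ :=
  Finset.univ.sup' ⟨u, Finset.mem_univ u⟩
    (fun v : V => (supWu G u W v - infWu G u W v) / 2)

/-! ### The averaging operator of a bidding game -/

namespace BiddingGame

variable {V : Type} [Fintype V] (G : BiddingGame V)

lemma mem_adj {x y : V} : y ∈ G.adj x ↔ G.E x y := by simp [adj]

/-- The maximal value of `f` over the successors of `x`. -/
noncomputable def up (f : V → ℝ) (x : V) : ℝ := (G.adj x).sup' (G.adj_nonempty x) f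

/-- The minimal value of `f` over the successors of `x`. -/
noncomputable def lo (f : V → ℝ) (x : V) : ℝ := (G.adj x).inf' (G.adj_nonempty x) f

/-- The mean of the maximal and the minimal value of `f` over the successors of `x`. -/
noncomputable def avg (f : V → ℝ) (x : V) : ℝ := (G.up f x + G.lo f x) / 2

/-- Half the spread of `f` over the successors of `x`. -/
noncomputable def gap (f : V → ℝ) (x : V) : ℝ := (G.up f x - G.lo f x) / 2

variable {G}

lemma le_up {f : V → ℝ} {x y : V} (h : G.E x y) : f y ≤ G.up f x :=
  Finset.le_sup' f (G.mem_adj.2 h)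

lemma lo_le {f : V → ℝ} {x y : V} (h : G.E x y) : G.lo f x ≤ f y :=
  Finset.inf'_le f (G.mem_adj.2 h)

lemma up_le {f : V → ℝ} {x : V} {c : ℝ} (h : ∀ y, G.E x y → f y ≤ c) : G.up f x ≤ c :=
  Finset.sup'_le _ _ fun y hy => h y (G.mem_adj.1 hy)

lemma le_lo {f : V → ℝ} {x : V} {c : ℝ} (h : ∀ y, G.E x y → c ≤ f y) : c ≤ G.lo f x :=
  Finset.le_inf' _ _ fun y hy => h y (G.mem_adj.1 hy)

lemma exists_eq_lo (G : BiddingGame V) (f : V → ℝ) (x : V) :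
    ∃ y, G.E x y ∧ f y = G.lo f x := by
  obtain ⟨y, hy, h⟩ := Finset.exists_mem_eq_inf' (G.adj_nonempty x) f
  exact ⟨y, G.mem_adj.1 hy, h.symm⟩

variable (G) in
/-- A successor of `x` at which `f` is minimal. -/
noncomputable def argmin (f : V → ℝ) (x : V) : V := (G.exists_eq_lo f x).choose

lemma E_argmin (f : V → ℝ) (x : V) : G.E x (G.argmin f x) := (G.exists_eq_lo f x).choose_spec.1

lemma apply_argmin (f : V → ℝ) (x : V) : f (G.argmin f x) = G.lo f x :=
  (G.exists_eq_lo f x).choose_spec.2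

lemma lo_le_up (f : V → ℝ) (x : V) : G.lo f x ≤ G.up f x :=
  (lo_le (E_argmin f x)).trans (le_up (E_argmin f x))

lemma gap_nonneg (f : V → ℝ) (x : V) : 0 ≤ G.gap f x := by
  have := lo_le_up (G := G) f x
  unfold gap; linarith

lemma lo_eq (f : V → ℝ) (x : V) : G.lo f x = G.avg f x - G.gap f x := by
  unfold avg gap; ring

lemma up_eq (f : V → ℝ) (x : V) : G.up f x = G.avg f x + G.gap f x := by
  unfold avg gap; ring

lemma avg_mono {f g : V → ℝ} {x : V} (h : ∀ y, G.E x y → f y ≤ g y) :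
    G.avg f x ≤ G.avg g x := by
  have h1 : G.up f x ≤ G.up g x := up_le fun y hy => (h y hy).trans (le_up hy)
  have h2 : G.lo f x ≤ G.lo g x := le_lo fun y hy => (lo_le hy).trans (h y hy)
  unfold avg; linarith

lemma avg_congr {f g : V → ℝ} {x : V} (h : ∀ y, G.E x y → f y = g y) :
    G.avg f x = G.avg g x :=
  le_antisymm (avg_mono fun y hy => (h y hy).le) (avg_mono fun y hy => (h y hy).ge)

lemma avg_le {f : V → ℝ} {x : V} {c : ℝ} (h : ∀ y, G.E x y → f y ≤ c) : G.avg f x ≤ c := by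
  have := up_le h
  have := lo_le_up (G := G) f x
  unfold avg; linarith

lemma le_avg {f : V → ℝ} {x : V} {c : ℝ} (h : ∀ y, G.E x y → c ≤ f y) : c ≤ G.avg f x := by
  have := le_lo h
  have := lo_le_up (G := G) f x
  unfold avg; linarith

lemma avg_add_const (f : V → ℝ) (c : ℝ) (x : V) :
    G.avg (fun y => f y + c) x = G.avg f x + c := by
  have h1 : G.up (fun y => f y + c) x = G.up f x + c := by
    apply le_antisymm
    · exact up_le fun y hy => by have := le_up (f := f) hy; linarith
    · rw [← le_sub_iff_add_le]
      exact up_le fun y hy => by have := le_up (f := fun y => f y + c) hy; linarith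
  have h2 : G.lo (fun y => f y + c) x = G.lo f x + c := by
    apply le_antisymm
    · rw [← sub_le_iff_le_add]
      exact le_lo fun y hy => by have := lo_le (f := fun y => f y + c) hy; linarith
    · exact le_lo fun y hy => by have := lo_le (f := f) hy; linarith
  unfold avg; rw [h1, h2]; ring

lemma avg_neg (f : V → ℝ) (x : V) : G.avg (fun y => -f y) x = -G.avg f x := by
  have h1 : G.up (fun y => -f y) x = -G.lo f x := by
    apply le_antisymm
    · exact up_le fun y hy => neg_le_neg (lo_le hy)
    · rw [neg_le]
      exact le_lo fun y hy => by have := le_up (f := fun y => -f y) hy; linarith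
  have h2 : G.lo (fun y => -f y) x = -G.up f x := by
    apply le_antisymm
    · rw [le_neg]
      exact up_le fun y hy => by have := lo_le (f := fun y => -f y) hy; linarith
    · exact le_lo fun y hy => neg_le_neg (le_up hy)
  unfold avg; rw [h1, h2]; ring

lemma continuous_avg (G : BiddingGame V) (x : V) : Continuous fun f : V → ℝ => G.avg f x := by
  have h1 : Continuous fun f : V → ℝ => G.up f x :=
    Continuous.finset_sup'_apply (G.adj_nonempty x) fun y _ => continuous_apply y
  have h2 : Continuous fun f : V → ℝ => G.lo f x :=
    Continuous.finset_inf'_apply (G.adj_nonempty x) fun y _ => continuous_apply y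
  exact (h1.add h2).div_const 2

end BiddingGame

/-! ### Order and finiteness tools -/

/-- The Knaster–Tarski theorem on a box of real-valued functions. -/
lemma exists_fixedPoint_of_monotone {V : Type} (F : (V → ℝ) → V → ℝ) (hF : Monotone F)
    {a b : V → ℝ} (hab : a ≤ b) (ha : a ≤ F a) (hb : F b ≤ b) :
    ∃ f, a ≤ f ∧ f ≤ b ∧ F f = f := by
  have : Fact (a ≤ b) := ⟨hab⟩
  let F' : Set.Icc a b →o Set.Icc a b :=
    ⟨fun f => ⟨F f, ha.trans (hF f.2.1), (hF f.2.2).trans hb⟩, fun f g h => hF h⟩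
  exact ⟨F'.lfp, F'.lfp.2.1, F'.lfp.2.2, congrArg Subtype.val F'.map_lfp⟩

lemma exists_pos_forall_le {V : Type} [Finite V] (f : V → ℝ) (hf : ∀ x, 0 < f x) :
    ∃ μ > 0, ∀ x, μ ≤ f x := by
  obtain ⟨M, hM⟩ := Finite.exists_le fun x => (f x)⁻¹
  refine ⟨(max M 1)⁻¹, by positivity, fun x => ?_⟩
  exact inv_le_of_inv_le₀ (hf x) ((hM x).trans (le_max_left _ _))

/-- If every point reaches `T` along `r`, there is a function which can be tripled along
`r` outside of `T`. -/
lemma exists_growing_of_reach {V : Type} (r : V → V → Prop) (T : Set V)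
    (h : ∀ x, ∃ y ∈ T, Relation.ReflTransGen r x y) :
    ∃ p : V → ℝ, (∀ x, 0 < p x ∧ p x ≤ 1) ∧ ∀ x ∉ T, ∃ y, r x y ∧ 3 * p x ≤ p y := by
  let L : ℕ → Set V := fun n => Nat.rec T (fun _ S => {x | ∃ y ∈ S, r x y}) n
  have hL : ∀ x, ∃ n, x ∈ L n := by
    intro x
    obtain ⟨y, hy, hxy⟩ := h x
    induction hxy using Relation.ReflTransGen.head_induction_on with
    | refl => exact ⟨0, hy⟩
    | head hab _ ih =>
      obtain ⟨n, hn⟩ := ih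
      exact ⟨n + 1, _, hn, hab⟩
  let d : V → ℕ := fun x => sInf {n | x ∈ L n}
  have hd : ∀ x, x ∈ L (d x) := fun x => Nat.sInf_mem (s := {n | x ∈ L n}) (hL x)
  refine ⟨fun x => (1 / 3 : ℝ) ^ d x, fun x => ⟨by positivity,
    pow_le_one₀ (by norm_num) (by norm_num)⟩, fun x hx => ?_⟩
  have hpos : d x ≠ 0 := fun h0 => hx (by have := hd x; rwa [h0] at this)
  obtain ⟨k, hk⟩ := Nat.exists_eq_succ_of_ne_zero hpos
  have hs := hd x
  rw [hk] at hs
  obtain ⟨y, hy, hxy⟩ := hs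
  refine ⟨y, hxy, ?_⟩
  have : (1 / 3 : ℝ) ^ k ≤ (1 / 3 : ℝ) ^ d y :=
    pow_le_pow_of_le_one (by norm_num) (by norm_num) (Nat.sInf_le hy)
  simp only [hk, pow_succ]
  linarith

/-! ### Recurrent vertices -/

namespace BiddingGame

variable {V : Type} [Fintype V] (G : BiddingGame V)

/-- The vertices reachable from `x`. -/
def cone (x : V) : Set V := {y | Relation.ReflTransGen G.E x y}

/-- A vertex is recurrent when it is reachable from every vertex that it reaches, i.e. when
it belongs to a bottom strongly connected component. -/
def recurrent : Set V := {x | ∀ y ∈ G.cone x, x ∈ G.cone y}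

variable {G}

lemma self_mem_cone (x : V) : x ∈ G.cone x := Relation.ReflTransGen.refl

lemma cone_eq_of_recurrent {x y : V} (hx : x ∈ G.recurrent) (hy : y ∈ G.cone x) :
    G.cone y = G.cone x :=
  Set.Subset.antisymm (fun _ hz => Relation.ReflTransGen.trans hy hz)
    (fun _ hz => Relation.ReflTransGen.trans (hx y hy) hz)

lemma recurrent_of_mem_cone {x y : V} (hx : x ∈ G.recurrent) (hy : y ∈ G.cone x) :
    y ∈ G.recurrent := by
  intro z hz
  rw [cone_eq_of_recurrent hx hy] at hz
  rw [cone_eq_of_recurrent hx hz]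
  exact hy

lemma exists_recurrent_mem_cone (x : V) : ∃ y ∈ G.recurrent, y ∈ G.cone x := by
  obtain ⟨y, hy, hmin⟩ := Set.exists_min_image (G.cone x) (fun y => (G.cone y).ncard)
    (Set.toFinite _) ⟨x, self_mem_cone x⟩
  refine ⟨y, fun z hz => ?_, hy⟩
  have hsub : G.cone z ⊆ G.cone y := fun _ h => Relation.ReflTransGen.trans hz h
  rw [Set.eq_of_subset_of_ncard_le hsub (hmin z (Relation.ReflTransGen.trans hy hz))]
  exact self_mem_cone y

/-- A function that is a fixed point of the averaging operator off the recurrent vertices can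
be turned into a strict supersolution by an arbitrarily small increase. -/
lemma exists_strict_supersolution {R : V → ℝ}
    (hR : ∀ x ∉ G.recurrent, G.avg R x = R x) {ε : ℝ} (hε : 0 < ε) :
    ∃ g : V → ℝ, ∃ μ > 0, (∀ x, R x ≤ g x ∧ g x ≤ R x + ε) ∧
      ∀ x ∉ G.recurrent, G.avg g x + μ ≤ g x := by
  let r : V → V → Prop := fun x y => G.E x y ∧ R y = G.lo R x
  have hreach : ∀ x, ∃ y ∈ G.recurrent, Relation.ReflTransGen r x y := by
    by_contra! hcon
    let D : Set V := {x | ∀ y ∈ G.recurrent, ¬ Relation.ReflTransGen r x y}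
    obtain ⟨x, hx, hmin⟩ := Set.exists_min_image D R (Set.toFinite _) hcon
    have hDr : ∀ x ∈ D, ∀ y, r x y → y ∈ D := fun x hx y hxy z hz h =>
      hx z hz (Relation.ReflTransGen.head hxy h)
    have hcl : ∀ y ∈ G.cone x, y ∈ D ∧ R y = R x := by
      intro y hy
      induction hy with
      | refl => exact ⟨hx, rfl⟩
      | @tail b c _ hbc ih =>
        obtain ⟨hbD, hbR⟩ := ih
        have hb : b ∉ G.recurrent := fun h => hbD b h .refl
        have h1 := hmin _ (hDr b hbD _ ⟨E_argmin R b, apply_argmin R b⟩)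
        rw [apply_argmin (G := G) R b] at h1
        have h2 := hR b hb
        have h3 := lo_le_up (G := G) R b
        unfold avg at h2
        have h4 := lo_le (f := R) hbc
        have h5 := le_up (f := R) hbc
        have h6 : R c = G.lo R b := by linarith
        exact ⟨hDr b hbD c ⟨hbc, h6⟩, by linarith⟩
    obtain ⟨y, hy, hxy⟩ := exists_recurrent_mem_cone (G := G) x
    exact (hcl y hxy).1 y hy .refl
  obtain ⟨p, hp, hgrow⟩ := exists_growing_of_reach r G.recurrent hreach
  obtain ⟨μ, hμ, hμp⟩ := exists_pos_forall_le p fun x => (hp x).1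
  refine ⟨fun x => R x + ε * (1 - p x), ε * μ / 2, by positivity, fun x => ⟨?_, ?_⟩,
    fun x hx => ?_⟩
  · nlinarith [hp x]
  · nlinarith [hp x]
  · obtain ⟨y, ⟨hxy, hy⟩, hpy⟩ := hgrow x hx
    have h1 : G.up (fun x => R x + ε * (1 - p x)) x ≤ G.up R x + ε :=
      up_le fun z hz => by nlinarith [hp z, le_up (f := R) hz]
    have h2 := lo_le (f := fun x => R x + ε * (1 - p x)) hxy
    have h3 := hR x hx
    unfold avg at h3 ⊢
    nlinarith [hμp x, mul_le_mul_of_nonneg_left hpy hε.le, mul_le_mul_of_nonneg_left (hμp x) hε.le]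

end BiddingGame

/-! ### Potentials on bottom components -/

namespace BiddingGame

variable {V : Type} [Fintype V] {G : BiddingGame V}

lemma mem_of_E {C : Set V} (hC : ∀ x ∈ C, G.cone x = C) {x y : V} (hx : x ∈ C)
    (hxy : G.E x y) : y ∈ C := by
  rw [← hC x hx]
  exact Relation.ReflTransGen.single hxy

/-- Approximate supersolutions on a strongly connected closed set have bounded oscillation. -/
lemma exists_oscillation_bound {C : Set V} (hC : ∀ x ∈ C, G.cone x = C) (L : ℝ) :
    ∃ S : ℝ, 0 ≤ S ∧ ∀ f : V → ℝ, (∀ x ∈ C, 0 ≤ f x) → (∀ x ∈ C, G.avg f x ≤ f x + L) →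
      ∀ z ∈ C, f z ≤ 0 → ∀ y ∈ C, f y ≤ S := by
  have key : ∀ z y : V, ∃ S : ℝ, z ∈ C → y ∈ C → ∀ f : V → ℝ, (∀ x ∈ C, 0 ≤ f x) →
      (∀ x ∈ C, G.avg f x ≤ f x + L) → f z ≤ 0 → f y ≤ S := by
    intro z y
    by_cases hz : z ∈ C
    swap
    · exact ⟨0, fun h => absurd h hz⟩
    by_cases hy : y ∈ C
    swap
    · exact ⟨0, fun _ h => absurd h hy⟩
    suffices h : ∃ S : ℝ, ∀ f : V → ℝ, (∀ x ∈ C, 0 ≤ f x) →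
        (∀ x ∈ C, G.avg f x ≤ f x + L) → f z ≤ 0 → f y ≤ S by
      obtain ⟨S, hS⟩ := h
      exact ⟨S, fun _ _ => hS⟩
    have hzy : y ∈ G.cone z := by rwa [hC z hz]
    clear hy
    induction hzy with
    | refl => exact ⟨0, fun f _ _ h => h⟩
    | @tail b c hzb hbc ih =>
      have hb : b ∈ C := by rw [← hC z hz]; exact hzb
      obtain ⟨S, hS⟩ := ih
      refine ⟨2 * S + 2 * L, fun f h0 h1 h2 => ?_⟩
      have h3 := hS f h0 h1 h2
      have h4 := h1 b hb
      have h5 : 0 ≤ G.lo f b := le_lo fun y hy => h0 y (mem_of_E hC hb hy)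
      have h6 := le_up (f := f) hbc
      unfold avg at h4
      linarith
  choose S hS using key
  obtain ⟨M, hM⟩ := Finite.exists_le fun q : V × V => S q.1 q.2
  exact ⟨max M 0, le_max_right _ _, fun f h0 h1 z hz h2 y hy =>
    (hS z y hz hy f h0 h1 h2).trans ((hM (z, y)).trans (le_max_left _ _))⟩

/-- The discounted optimality equation is solvable. -/
lemma exists_discounted_value (G : BiddingGame V) (w : V → ℝ) {M μ : ℝ}
    (hw : ∀ x, |w x| ≤ M) (hμ : 0 < μ) (hμ1 : μ ≤ 1) :
    ∃ U : V → ℝ, (∀ x, U x = w x + (1 - μ) * G.avg U x) ∧ ∀ x, |U x| ≤ M / μ := by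
  have hM : M + (1 - μ) * (M / μ) = M / μ := by field_simp; ring
  by_cases hV : Nonempty V
  swap
  · exact ⟨0, fun x => absurd ⟨x⟩ hV, fun x => absurd ⟨x⟩ hV⟩
  obtain ⟨v⟩ := hV
  have hM0 : 0 ≤ M / μ := div_nonneg ((abs_nonneg _).trans (hw v)) hμ.le
  obtain ⟨U, h1, h2, h3⟩ := exists_fixedPoint_of_monotone
    (fun U x => w x + (1 - μ) * G.avg U x)
    (fun f g hfg x => by
      have := avg_mono (G := G) (x := x) fun y _ => hfg y
      have := mul_le_mul_of_nonneg_left this (sub_nonneg.2 hμ1)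
      dsimp only; linarith)
    (a := fun _ => -(M / μ)) (b := fun _ => M / μ) (fun x => by dsimp only; linarith)
    (fun x => by
      have h1 : -(M / μ) ≤ G.avg (fun _ => -(M / μ)) x := le_avg fun _ _ => le_rfl
      have h2 := mul_le_mul_of_nonneg_left h1 (sub_nonneg.2 hμ1)
      have h3 := neg_le_of_abs_le (hw x)
      dsimp only; linarith)
    (fun x => by
      have h1 : G.avg (fun _ => M / μ) x ≤ M / μ := avg_le fun _ _ => le_rfl
      have h2 := mul_le_mul_of_nonneg_left h1 (sub_nonneg.2 hμ1)
      have h3 := le_of_abs_le (hw x)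
      dsimp only; linarith)
  exact ⟨U, fun x => (congrFun h3 x).symm, fun x => abs_le.2 ⟨h1 x, h2 x⟩⟩

/-- On a strongly connected closed set, either the weights admit a supersolution, or the
opposite weights admit a strict one. -/
lemma exists_potential_or (w : V → ℝ) {C : Set V} (hC : ∀ x ∈ C, G.cone x = C)
    (hne : C.Nonempty) :
    (∃ W : V → ℝ, ∀ x ∈ C, G.avg W x + w x ≤ W x) ∨
      ∃ W : V → ℝ, ∃ δ > 0, ∀ x ∈ C, G.avg W x - w x + δ ≤ W x := by
  rw [or_iff_not_imp_right]
  intro hMax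
  obtain ⟨M, hM⟩ := Finite.exists_le fun x => |w x|
  obtain ⟨S, hS0, hS⟩ := exists_oscillation_bound hC (2 * M)
  have happrox : ∀ μ : ℝ, 0 < μ → μ ≤ 1 → ∃ f : V → ℝ, f ∈ Set.Icc (fun _ => 0) (fun _ => S) ∧
      ∀ x ∈ C, G.avg f x + w x ≤ f x + μ * S := by
    intro μ hμ hμ1
    obtain ⟨U, hU, hUM⟩ := exists_discounted_value G w hM hμ hμ1
    have hx : ∃ x ∈ C, G.avg U x ≤ 0 := by
      by_contra! hcon
      obtain ⟨x0, hx0, hmin⟩ := Set.exists_min_image C (G.avg U) (Set.toFinite _) hne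
      refine hMax ⟨fun y => -U y, μ * G.avg U x0, mul_pos hμ (hcon x0 hx0), fun x hx => ?_⟩
      rw [avg_neg]
      have := mul_le_mul_of_nonneg_left (hmin x hx) hμ.le
      linarith [hU x]
    obtain ⟨z, hz, hmin⟩ := Set.exists_min_image C U (Set.toFinite _) hne
    have hUz : U z ≤ 0 := by
      obtain ⟨x, hxC, hx⟩ := hx
      have h1 := hmin _ (mem_of_E hC hxC (E_argmin U x))
      rw [apply_argmin (G := G) U x] at h1
      have h2 := lo_le_up (G := G) U x
      unfold avg at hx
      linarith
    have havg : ∀ x, G.avg (fun y => U y + -U z) x = G.avg U x - U z := fun x => by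
      rw [avg_add_const]; ring
    have hUS : ∀ y ∈ C, U y + -U z ≤ S := by
      refine hS (fun y => U y + -U z) (fun x hx => by have := hmin x hx; linarith)
        (fun x hx => ?_) z hz (by simp)
      rw [havg]
      have h1 : G.avg U x ≤ M / μ := avg_le fun y _ => (le_of_abs_le (hUM y))
      have h2 := mul_le_mul_of_nonneg_left h1 hμ.le
      rw [mul_div_cancel₀ _ hμ.ne'] at h2
      have h3 := neg_le_of_abs_le (hM x)
      linarith [hU x]
    refine ⟨fun y => if y ∈ C then U y + -U z else 0, ⟨fun y => ?_, fun y => ?_⟩, fun x hx => ?_⟩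
    · by_cases hy : y ∈ C
      · have := hmin y hy
        simp only [hy, if_true]; linarith
      · simp [hy]
    · by_cases hy : y ∈ C
      · simpa [hy] using hUS y hy
      · simpa [hy] using hS0
    · have h1 : G.avg (fun y => if y ∈ C then U y + -U z else 0) x =
          G.avg (fun y => U y + -U z) x :=
        avg_congr fun y hy => by simp [mem_of_E hC hx hy]
      rw [h1, havg]
      simp only [hx, if_true]
      have h2 : G.avg U x ≤ S := avg_le fun y hy => by
        have := hUS y (mem_of_E hC hx hy); linarith
      have h3 := mul_le_mul_of_nonneg_left h2 hμ.le
      linarith [hU x]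
  choose f hf hfC using fun n : ℕ => happrox (1 / ((n : ℝ) + 1)) (by positivity)
    (by rw [div_le_one (by positivity)]; linarith [(Nat.cast_nonneg n : (0 : ℝ) ≤ n)])
  obtain ⟨W, -, φ, hφ, hlim⟩ := isCompact_Icc.tendsto_subseq hf
  refine ⟨W, fun x hx => ?_⟩
  have h1 : Filter.Tendsto (fun n => G.avg (f (φ n)) x + w x) Filter.atTop
      (nhds (G.avg W x + w x)) :=
    (((continuous_avg G x).tendsto W).comp hlim).add_const _
  have h2 : Filter.Tendsto (fun n => f (φ n) x + 1 / ((φ n : ℝ) + 1) * S) Filter.atTop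
      (nhds (W x + 0 * S)) :=
    ((tendsto_pi_nhds.1 hlim) x).add
      ((tendsto_one_div_add_atTop_nhds_zero_nat.comp hφ.tendsto_atTop).mul_const S)
  have := le_of_tendsto_of_tendsto' h1 h2 fun n => hfC (φ n) x hx
  simpa using this

/-- The recurrent vertices whose bottom component carries a potential for Min. -/
def minRecurrent (G : BiddingGame V) (w : V → ℝ) : Set V :=
  {x | x ∈ G.recurrent ∧ ∃ W : V → ℝ, ∀ y ∈ G.cone x, G.avg W y + w y ≤ W y}

lemma cone_eq_of_mem_cone {x : V} (hx : x ∈ G.recurrent) :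
    ∀ y ∈ G.cone x, G.cone y = G.cone x := fun _ hy => cone_eq_of_recurrent hx hy

lemma minRecurrent_iff_of_E {w : V → ℝ} {x y : V} (hx : x ∈ G.recurrent) (hxy : G.E x y) :
    y ∈ G.minRecurrent w ↔ x ∈ G.minRecurrent w := by
  have hy : y ∈ G.cone x := Relation.ReflTransGen.single hxy
  simp only [minRecurrent, Set.mem_ofPred_eq, cone_eq_of_recurrent hx hy, hx,
    recurrent_of_mem_cone hx hy]

/-- Potentials given separately on each bottom component can be glued together. -/
lemma exists_glued {P : V → Prop} (hP : ∀ x, P x → x ∈ G.recurrent)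
    (Q : (V → ℝ) → V → Prop) (hQ : ∀ f g : V → ℝ, ∀ x, (∀ y ∈ G.cone x, f y = g y) → Q f x → Q g x)
    (h : ∀ x, P x → ∃ W : V → ℝ, ∀ y ∈ G.cone x, Q W y) :
    ∃ W : V → ℝ, ∀ x, P x → Q W x := by
  let F : Set V → V → ℝ := fun C => if hC : ∃ W : V → ℝ, ∀ y ∈ C, Q W y then hC.choose else 0
  refine ⟨fun y => F (G.cone y) y, fun x hx => ?_⟩
  refine hQ (F (G.cone x)) _ x (fun y hy => ?_) ?_
  · rw [cone_eq_of_recurrent (hP x hx) hy]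
  · have hC : ∃ W : V → ℝ, ∀ y ∈ G.cone x, Q W y := h x hx
    simp only [F, hC, dif_pos]
    exact hC.choose_spec x (self_mem_cone x)

lemma avg_congr_cone {f g : V → ℝ} {x : V} (h : ∀ y ∈ G.cone x, f y = g y) :
    G.avg f x = G.avg g x :=
  avg_congr fun y hy => h y (Relation.ReflTransGen.single hy)

lemma exists_min_potential (G : BiddingGame V) (w : V → ℝ) :
    ∃ W : V → ℝ, ∀ x ∈ G.minRecurrent w, G.avg W x + w x ≤ W x :=
  exists_glued (P := fun x => x ∈ G.minRecurrent w) (fun x hx => hx.1)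
    (fun W x => G.avg W x + w x ≤ W x)
    (fun f g x hfg h => by rwa [← avg_congr_cone hfg, ← hfg x (self_mem_cone x)])
    fun x hx => hx.2

lemma exists_max_potential (G : BiddingGame V) (w : V → ℝ) :
    ∃ W : V → ℝ, ∃ δ > 0, ∀ x ∈ G.recurrent \ G.minRecurrent w,
      G.avg W x - w x + δ ≤ W x := by
  obtain ⟨W, hW⟩ := exists_glued (P := fun x => x ∈ G.recurrent \ G.minRecurrent w)
    (fun x hx => hx.1) (fun W x => G.avg W x - w x < W x)
    (fun f g x hfg h => by rwa [← avg_congr_cone hfg, ← hfg x (self_mem_cone x)])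
    (fun x hx => by
      rcases exists_potential_or w (cone_eq_of_mem_cone hx.1) ⟨x, self_mem_cone x⟩ with
        h | ⟨W, δ, hδ, h⟩
      · exact absurd ⟨hx.1, h⟩ hx.2
      · exact ⟨W, fun y hy => by linarith [h y hy]⟩)
  obtain ⟨δ, hδ, h⟩ := exists_pos_forall_le
    (fun x => if x ∈ G.recurrent \ G.minRecurrent w then W x - (G.avg W x - w x) else 1)
    (fun x => by
      split_ifs with hx
      · exact sub_pos.2 (hW x hx)
      · exact one_pos)
  refine ⟨W, δ, hδ, fun x hx => ?_⟩
  have := h x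
  rw [if_pos hx] at this
  linarith

/-- The Richman function of the game in which Min tries to reach `T` and Max tries to reach the
other recurrent vertices. -/
lemma exists_harmonic (G : BiddingGame V) (T : Set V) :
    ∃ R : V → ℝ, (∀ x, 0 ≤ R x ∧ R x ≤ 1) ∧ (∀ x ∉ G.recurrent, G.avg R x = R x) ∧
      ∀ x ∈ G.recurrent, R x = if x ∈ T then 0 else 1 := by
  obtain ⟨R, h0, h1, hR⟩ := exists_fixedPoint_of_monotone
    (fun R x => if x ∈ G.recurrent then (if x ∈ T then 0 else 1) else G.avg R x)
    (fun f g hfg x => by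
      dsimp only
      split_ifs
      · exact le_rfl
      · exact le_rfl
      · exact avg_mono fun y _ => hfg y)
    (a := fun _ => 0) (b := fun _ => 1) (fun _ => zero_le_one)
    (fun x => by
      dsimp only
      split_ifs
      · exact le_rfl
      · exact zero_le_one
      · exact le_avg fun _ _ => le_rfl)
    (fun x => by
      dsimp only
      split_ifs
      · exact zero_le_one
      · exact le_rfl
      · exact avg_le fun _ _ => le_rfl)
  refine ⟨R, fun x => ⟨h0 x, h1 x⟩, fun x hx => ?_, fun x hx => ?_⟩
  · simpa [hx] using congrFun hR x
  · simpa [hx] using (congrFun hR x).symm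

end BiddingGame

/-! ### Trajectories of budgets and vertices -/

namespace BiddingGame

variable {V : Type} [Fintype V] {G : BiddingGame V}

/-- What a player moving by `m` and bidding `a` experiences: `x` is the sequence of vertices and
`b` the sequence of the player's budgets. -/
structure IsTrajectory (G : BiddingGame V) (m : V → V) (x : ℕ → V) (b a : ℕ → ℝ) : Prop where
  E_move : ∀ y, G.E y (m y)
  budget_nonneg : ∀ n, 0 ≤ b n
  budget_le_one : ∀ n, b n ≤ 1
  step : ∀ n, (x (n + 1) = m (x n) ∧ b (n + 1) = b n - a n) ∨
    (G.E (x n) (x (n + 1)) ∧ b n + a n ≤ b (n + 1))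

namespace IsTrajectory

variable {m : V → V} {x : ℕ → V} {b a : ℕ → ℝ}

lemma E (h : IsTrajectory G m x b a) (n : ℕ) : G.E (x n) (x (n + 1)) := by
  rcases h.step n with ⟨h1, -⟩ | ⟨h1, -⟩
  · rw [h1]; exact h.E_move _
  · exact h1

lemma mem_of_le (h : IsTrajectory G m x b a) {S : Set V} (hS : ∀ y ∈ S, ∀ z, G.E y z → z ∈ S)
    {N : ℕ} (hN : x N ∈ S) {n : ℕ} (hn : N ≤ n) : x n ∈ S := by
  induction n, hn using Nat.le_induction with
  | base => exact hN
  | succ n _ ih => exact hS _ ih _ (h.E n)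

/-- One step of a player who moves to the minimum of a potential `f`. -/
lemma potential_step (h : IsTrajectory G m x b a) {f : V → ℝ} {n : ℕ}
    (hm : m (x n) = G.argmin f (x n)) :
    (f (x (n + 1)) = G.avg f (x n) - G.gap f (x n) ∧ b (n + 1) = b n - a n) ∨
      (f (x (n + 1)) ≤ G.avg f (x n) + G.gap f (x n) ∧ b n + a n ≤ b (n + 1)) := by
  rcases h.step n with ⟨h1, h2⟩ | ⟨h1, h2⟩
  · left
    rw [h1, hm, apply_argmin (G := G) f (x n), lo_eq]
    exact ⟨rfl, h2⟩
  · right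
    rw [← up_eq]
    exact ⟨le_up h1, h2⟩

/-- A player whose budget exceeds a strict supersolution forces a visit to a recurrent vertex. -/
lemma exists_visit_recurrent (h : IsTrajectory G m x b a) {g : V → ℝ} {μ : ℝ} (hμ : 0 < μ)
    (hg0 : ∀ y, 0 ≤ g y) (hg : ∀ y ∉ G.recurrent, G.avg g y + μ ≤ g y)
    (hm : ∀ y ∉ G.recurrent, m y = G.argmin g y)
    (ha : ∀ n, x n ∉ G.recurrent → a n = min (b n) (G.gap g (x n)))
    (hb : g (x 0) < b 0) : ∃ n, x n ∈ G.recurrent ∧ g (x n) < b n := by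
  by_contra! hcon
  have key : ∀ n : ℕ, g (x n) + n * μ < b n := by
    intro n
    induction n with
    | zero => simpa using hb
    | succ n ih =>
      have hnμ : 0 ≤ n * μ := by positivity
      have hx : x n ∉ G.recurrent := fun hx => by linarith [hcon n hx]
      have h1 := hg _ hx
      have h2 : 0 ≤ G.lo g (x n) := le_lo fun y _ => hg0 y
      rw [lo_eq] at h2
      have h3 := ha n hx
      rw [min_eq_right (by linarith)] at h3
      push_cast
      rcases h.potential_step (hm _ hx) with ⟨h4, h5⟩ | ⟨h4, h5⟩ <;> linarith
  obtain ⟨n, hn⟩ := exists_nat_gt (1 / μ)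
  rw [div_lt_iff₀ hμ] at hn
  linarith [key n, h.budget_le_one n, hg0 (x n)]

/-- Bidding the proportion `gap / (potential energy)` of the budget whenever the potential energy
is high keeps the energy from diverging to infinity. -/
lemma exists_frequently_energy_le (h : IsTrajectory G m x b a) {S : Set V}
    (hS : ∀ y ∈ S, ∀ z, G.E y z → z ∈ S) {w W : V → ℝ}
    (hW : ∀ y ∈ S, G.avg W y + w y ≤ W y) (hm : ∀ y ∈ S, m y = G.argmin W y)
    {e : ℕ → ℝ} (he : ∀ n, e (n + 1) = e n + w (x n)) {K : ℝ} (hK : ∀ y, G.gap W y < K)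
    (ha : ∀ n, x n ∈ S →
      a n = if K ≤ e n + W (x n) then b n * (G.gap W (x n) / (e n + W (x n))) else 0)
    {N : ℕ} (hN : x N ∈ S) (hb : 0 < b N) : ∃ c, ∃ᶠ n in Filter.atTop, e n ≤ c := by
  have hx : ∀ n, N ≤ n → x n ∈ S := fun n hn => h.mem_of_le hS hN hn
  have hstep : ∀ n, N ≤ n →
      (e (n + 1) + W (x (n + 1)) ≤ e n + W (x n) - G.gap W (x n) ∧ b (n + 1) = b n - a n) ∨
      (e (n + 1) + W (x (n + 1)) ≤ e n + W (x n) + G.gap W (x n) ∧ b n + a n ≤ b (n + 1)) := by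
    intro n hn
    have h1 := hW _ (hx n hn)
    rcases h.potential_step (hm _ (hx n hn)) with ⟨h2, h3⟩ | ⟨h2, h3⟩
    · exact Or.inl ⟨by rw [he]; linarith, h3⟩
    · exact Or.inr ⟨by rw [he]; linarith, h3⟩
  have hgap := fun y => gap_nonneg (G := G) W y
  have hK0 : 0 < K := (hgap (x 0)).trans_lt (hK _)
  have hpos : ∀ n, N ≤ n → 0 < b n := by
    intro n hn
    induction n, hn using Nat.le_induction with
    | base => exact hb
    | succ n hn ih =>
      have h1 := ha n (hx n hn)
      split_ifs at h1 with hKn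
      · have hr : G.gap W (x n) / (e n + W (x n)) < 1 := by
          rw [div_lt_one (hK0.trans_le hKn)]
          exact (hK _).trans_le hKn
        have hr0 : 0 ≤ G.gap W (x n) / (e n + W (x n)) :=
          div_nonneg (hgap _) (hK0.le.trans hKn)
        rcases hstep n hn with ⟨-, h2⟩ | ⟨-, h2⟩ <;> nlinarith
      · rcases hstep n hn with ⟨-, h2⟩ | ⟨-, h2⟩ <;> linarith
  obtain ⟨D, hD⟩ := Finite.exists_le fun y => -W y
  by_cases hfreq : ∃ᶠ n in Filter.atTop, e n + W (x n) < K
  · exact ⟨K + D, hfreq.mono fun n hn => by linarith [hD (x n)]⟩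
  · rw [Filter.not_frequently, Filter.eventually_atTop] at hfreq
    obtain ⟨N', hN'⟩ := hfreq
    set N₁ := max N N'
    have hhigh : ∀ n, N₁ ≤ n → K ≤ e n + W (x n) := fun n hn =>
      not_lt.1 (hN' n ((le_max_right _ _).trans hn))
    set s := b N₁ / (e N₁ + W (x N₁))
    have hs : 0 < s := div_pos (hpos _ (le_max_left _ _)) (hK0.trans_le (hhigh _ le_rfl))
    have hinv : ∀ n, N₁ ≤ n → s * (e n + W (x n)) ≤ b n := by
      intro n hn
      induction n, hn using Nat.le_induction with
      | base => exact (div_mul_cancel₀ _ (hK0.trans_le (hhigh _ le_rfl)).ne').le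
      | succ n hn ih =>
        have hnN := (le_max_left _ _).trans hn
        have hE := hK0.trans_le (hhigh n hn)
        have h1 := ha n (hx n hnN)
        rw [if_pos (hhigh n hn)] at h1
        set ρ := b n / (e n + W (x n))
        have hbn : b n = ρ * (e n + W (x n)) := (div_mul_cancel₀ _ hE.ne').symm
        have han : a n = ρ * G.gap W (x n) := by rw [h1]; simp only [ρ]; ring
        have hsρ : s ≤ ρ := (le_div_iff₀ hE).2 ih
        have hE' := hK0.trans_le (hhigh (n + 1) (Nat.le_succ_of_le hn))
        have hmul := mul_le_mul_of_nonneg_right hsρ hE'.le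
        have hρ : 0 ≤ ρ := hs.le.trans hsρ
        rcases hstep n hnN with ⟨h2, h3⟩ | ⟨h2, h3⟩
        · have := mul_le_mul_of_nonneg_left h2 hρ
          rw [h3, han, hbn]; linarith
        · have := mul_le_mul_of_nonneg_left h2 hρ
          rw [han] at h3; linarith
    refine ⟨1 / s + D, (Filter.eventually_atTop.2 ⟨N₁, fun n hn => ?_⟩).frequently⟩
    have h1 : e n + W (x n) ≤ 1 / s := by
      rw [le_div_iff₀ hs]
      linarith [hinv n hn, h.budget_le_one n]
    linarith [hD (x n)]

/-- Bidding a vertex-dependent proportion of the budget makes the energy grow linearly on a closed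
set carrying a strict supersolution. -/
lemma exists_linear_energy (h : IsTrajectory G m x b a) {S : Set V}
    (hS : ∀ y ∈ S, ∀ z, G.E y z → z ∈ S) {w W : V → ℝ} {δ : ℝ}
    (hW : ∀ y ∈ S, G.avg W y - w y + 2 * δ ≤ W y) (hm : ∀ y ∈ S, m y = G.argmin W y)
    {e : ℕ → ℝ} (he : ∀ n, e (n + 1) = e n + w (x n)) {η : ℝ} (hη : 0 < η)
    (hηδ : ∀ y, η * G.gap W y ^ 2 / 2 ≤ δ)
    (ha : ∀ n, x n ∈ S → a n = b n * (1 - Real.exp (-(η * (G.gap W (x n) + δ)))))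
    {N : ℕ} (hN : x N ∈ S) (hb : 0 < b N) : ∃ c, ∀ n ≥ N, δ * n - c ≤ e n := by
  have hx : ∀ n, N ≤ n → x n ∈ S := fun n hn => h.mem_of_le hS hN hn
  let k : ℕ → ℝ := fun n => δ * n - e n + W (x n)
  let s := b N * Real.exp (-(η * k N))
  have hs : 0 < s := mul_pos hb (Real.exp_pos _)
  have hinv : ∀ n, N ≤ n → s * Real.exp (η * k n) ≤ b n := by
    intro n hn
    induction n, hn using Nat.le_induction with
    | base => simp only [s]; rw [mul_assoc, ← Real.exp_add]; simp
    | succ n hn ih =>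
      set β := G.gap W (x n)
      have hbn := h.budget_nonneg n
      have h1 := hW _ (hx n hn)
      have h2 := ha n (hx n hn)
      have hfac : ∀ r, k (n + 1) ≤ k n + r → s * Real.exp (η * k (n + 1)) ≤
          b n * Real.exp (η * r) := by
        intro r hr
        have h3 : Real.exp (η * k (n + 1)) ≤ Real.exp (η * k n) * Real.exp (η * r) := by
          rw [← Real.exp_add, ← mul_add]
          exact Real.exp_le_exp.2 (mul_le_mul_of_nonneg_left hr hη.le)
        calc s * Real.exp (η * k (n + 1)) ≤ s * (Real.exp (η * k n) * Real.exp (η * r)) :=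
              mul_le_mul_of_nonneg_left h3 hs.le
          _ = s * Real.exp (η * k n) * Real.exp (η * r) := by ring
          _ ≤ _ := mul_le_mul_of_nonneg_right ih (Real.exp_pos _).le
      rcases h.potential_step (hm _ (hx n hn)) with ⟨h3, h4⟩ | ⟨h3, h4⟩
      · refine (hfac (-(β + δ)) ?_).trans_eq ?_
        · simp only [k, he, Nat.cast_succ]; linarith
        · rw [h4, h2, mul_neg]; ring
      · refine (hfac (β - δ) ?_).trans (le_trans ?_ h4)
        · simp only [k, he, Nat.cast_succ]; linarith
        · have hcosh := Real.cosh_le_exp_half_sq (η * β)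
          have h5 : Real.exp ((η * β) ^ 2 / 2) ≤ Real.exp (η * δ) := by
            apply Real.exp_le_exp.2
            have := mul_le_mul_of_nonneg_left (hηδ (x n)) hη.le
            simp only [β]; linarith
          have h6 : Real.exp (η * (β - δ)) + Real.exp (-(η * (β + δ))) =
              2 * Real.cosh (η * β) * Real.exp (-(η * δ)) := by
            rw [Real.cosh_eq]
            rw [show η * (β - δ) = η * β + -(η * δ) by ring,
              show -(η * (β + δ)) = -(η * β) + -(η * δ) by ring, Real.exp_add, Real.exp_add]
            ring
          have h7 : Real.cosh (η * β) * Real.exp (-(η * δ)) ≤ 1 := by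
            calc _ ≤ Real.exp (η * δ) * Real.exp (-(η * δ)) :=
                  mul_le_mul_of_nonneg_right (hcosh.trans h5) (Real.exp_pos _).le
              _ = 1 := by rw [← Real.exp_add]; simp
          rw [h2]
          nlinarith
  obtain ⟨D, hD⟩ := Finite.exists_le fun y => -W y
  refine ⟨Real.log (1 / s) / η + D, fun n hn => ?_⟩
  have h1 : Real.exp (η * k n) ≤ 1 / s := by
    rw [le_div_iff₀ hs]
    linarith [hinv n hn, h.budget_le_one n]
  have h2 : k n ≤ Real.log (1 / s) / η := by
    rw [le_div_iff₀ hη, mul_comm]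
    exact (Real.le_log_iff_exp_le (by positivity)).2 h1
  simp only [k] at h2
  linarith [hD (x n)]

end IsTrajectory

end BiddingGame

/-! ### Plays and stationary strategies -/

section Plays

variable {V : Type}

lemma play_succ_cases (tb : TieBreak V) (f1 f2 : Strat V) (v0 : V) (n : ℕ) :
    (visit tb f1 f2 v0 (n + 1) = (f1 (play tb f1 f2 v0 n)).2 ∧
      (play tb f1 f2 v0 (n + 1)).pay1 =
        (play tb f1 f2 v0 n).pay1 + (f1 (play tb f1 f2 v0 n)).1 ∧
      (f2 (play tb f1 f2 v0 n)).1 ≤ (f1 (play tb f1 f2 v0 n)).1) ∨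
    (visit tb f1 f2 v0 (n + 1) = (f2 (play tb f1 f2 v0 n)).2 ∧
      (play tb f1 f2 v0 (n + 1)).pay1 =
        (play tb f1 f2 v0 n).pay1 - (f2 (play tb f1 f2 v0 n)).1 ∧
      (f1 (play tb f1 f2 v0 n)).1 ≤ (f2 (play tb f1 f2 v0 n)).1) := by
  simp only [visit, play, extend]
  split_ifs with h
  · left
    refine ⟨by simp [Hist.cur], by simp [Hist.pay1], ?_⟩
    rcases h with h | h
    · exact h.le
    · exact h.1.ge
  · right
    push Not at h
    exact ⟨by simp [Hist.cur], by simp [Hist.pay1, sub_eq_add_neg], h.1⟩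

lemma energyAll_play (w : V → ℤ) (tb : TieBreak V) (f1 f2 : Strat V) (v0 : V) (n : ℕ) :
    (play tb f1 f2 v0 n).energyAll w =
      energy w tb f1 f2 v0 n + w (visit tb f1 f2 v0 n) := by
  induction n with
  | zero => simp [Hist.energyAll, energy, visit, play, Hist.cur]
  | succ n ih =>
    have h : energy w tb f1 f2 v0 (n + 1) =
        energy w tb f1 f2 v0 n + w (visit tb f1 f2 v0 n) := Finset.sum_range_succ _ _
    rw [h, ← ih]
    simp only [visit, play, extend]
    split_ifs <;> simp [Hist.energyAll, Hist.cur, add_assoc]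

lemma energy_succ (w : V → ℤ) (tb : TieBreak V) (f1 f2 : Strat V) (v0 : V) (n : ℕ) :
    (energy w tb f1 f2 v0 (n + 1) : ℝ) =
      energy w tb f1 f2 v0 n + w (visit tb f1 f2 v0 n) := by
  simp [energy, Finset.sum_range_succ]

/-- The strategy that bids according to the current vertex, the player's current budget
(determined by the initial budget `B` and the net payments `pay`) and the current energy, and
moves according to the current vertex. -/
def stationary (w : V → ℤ) (B : ℝ) (pay : Hist V → ℝ) (bid : V → ℝ → ℤ → ℝ) (m : V → V) :
    Strat V :=
  fun h => (bid h.cur (B - pay h) (h.energyAll w), m h.cur)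

lemma memorylessE_stationary (w : V → ℤ) (B : ℝ) (bid : V → ℝ → ℤ → ℝ) (m : V → V) :
    MemorylessE w (stationary w B Hist.pay1 bid m) := by
  intro h h' h1 h2 h3
  simp only [stationary, h1, h2, h3]

variable {w : V → ℤ} {B : ℝ} {bid : V → ℝ → ℤ → ℝ} {m : V → V}

lemma budget1_nonneg (hB : 0 ≤ B) (hbid : ∀ y b e, 0 ≤ b → 0 ≤ bid y b e ∧ bid y b e ≤ b)
    (tb : TieBreak V) (f2 : Strat V) (v0 : V) (n : ℕ) :
    0 ≤ B - (play tb (stationary w B Hist.pay1 bid m) f2 v0 n).pay1 := by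
  induction n with
  | zero => simpa [play, Hist.pay1] using hB
  | succ n ih =>
    have h1 := hbid (play tb (stationary w B Hist.pay1 bid m) f2 v0 n).cur _
      ((play tb (stationary w B Hist.pay1 bid m) f2 v0 n).energyAll w) ih
    rcases play_succ_cases tb (stationary w B Hist.pay1 bid m) f2 v0 n with
      ⟨-, h2, -⟩ | ⟨-, h2, h3⟩
    · rw [h2]; simp only [stationary] at h1 ⊢; linarith [h1.2]
    · rw [h2]; simp only [stationary] at h1 h3 ⊢; linarith [h1.1]

lemma budget2_nonneg (hB : 0 ≤ B) (hbid : ∀ y b e, 0 ≤ b → 0 ≤ bid y b e ∧ bid y b e ≤ b)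
    (tb : TieBreak V) (f1 : Strat V) (v0 : V) (n : ℕ) :
    0 ≤ B - (play tb f1 (stationary w B Hist.pay2 bid m) v0 n).pay2 := by
  induction n with
  | zero => simpa [play, Hist.pay2, Hist.pay1] using hB
  | succ n ih =>
    have h1 := hbid (play tb f1 (stationary w B Hist.pay2 bid m) v0 n).cur _
      ((play tb f1 (stationary w B Hist.pay2 bid m) v0 n).energyAll w) ih
    rcases play_succ_cases tb f1 (stationary w B Hist.pay2 bid m) v0 n with
      ⟨-, h2, h3⟩ | ⟨-, h2, -⟩
    · simp only [Hist.pay2] at ih h1 ⊢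
      rw [h2]; simp only [stationary, Hist.pay2] at h1 h3 ⊢; linarith [h1.1]
    · simp only [Hist.pay2] at ih h1 ⊢
      rw [h2]; simp only [stationary, Hist.pay2] at h1 ⊢; linarith [h1.2]

variable [Fintype V] {G : BiddingGame V}

lemma legal1_stationary (hB : 0 ≤ B) (hm : ∀ y, G.E y (m y))
    (hbid : ∀ y b e, 0 ≤ b → 0 ≤ bid y b e ∧ bid y b e ≤ b) :
    Legal1 G (stationary w B Hist.pay1 bid m) B := fun tb f2 v0 n =>
  have h := hbid _ _ _ (budget1_nonneg (w := w) (m := m) hB hbid tb f2 v0 n)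
  ⟨h.1, h.2, hm _⟩

lemma legal2_stationary (hB : 0 ≤ B) (hm : ∀ y, G.E y (m y))
    (hbid : ∀ y b e, 0 ≤ b → 0 ≤ bid y b e ∧ bid y b e ≤ b) :
    Legal2 G (stationary w B Hist.pay2 bid m) B := fun tb f1 v0 n =>
  have h := hbid _ _ _ (budget2_nonneg (w := w) (m := m) hB hbid tb f1 v0 n)
  ⟨h.1, h.2, hm _⟩

lemma isTrajectory1 (hB : 0 ≤ B) (hm : ∀ y, G.E y (m y))
    (hbid : ∀ y b e, 0 ≤ b → 0 ≤ bid y b e ∧ bid y b e ≤ b) (tb : TieBreak V) {f2 : Strat V}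
    (hf2 : Legal2 G f2 (1 - B)) (v0 : V) {f1 : Strat V}
    (hf1 : f1 = stationary w B Hist.pay1 bid m) :
    G.IsTrajectory m (visit tb f1 f2 v0) (fun n => B - (play tb f1 f2 v0 n).pay1)
      (fun n => bid (visit tb f1 f2 v0 n) (B - (play tb f1 f2 v0 n).pay1)
        (energy w tb f1 f2 v0 n + w (visit tb f1 f2 v0 n))) where
  E_move := hm
  budget_nonneg n := by subst hf1; exact budget1_nonneg hB hbid tb f2 v0 n
  budget_le_one n := by
    have h := hf2 tb f1 v0 n
    have h1 := h.1.trans h.2.1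
    simp only [Hist.pay2] at h1
    linarith
  step n := by
    have hact : f1 (play tb f1 f2 v0 n) = (bid (visit tb f1 f2 v0 n)
        (B - (play tb f1 f2 v0 n).pay1)
        (energy w tb f1 f2 v0 n + w (visit tb f1 f2 v0 n)), m (visit tb f1 f2 v0 n)) := by
      rw [← energyAll_play, hf1]; rfl
    rcases play_succ_cases tb f1 f2 v0 n with ⟨h1, h2, -⟩ | ⟨h1, h2, h3⟩
    · left
      rw [hact] at h1 h2
      exact ⟨h1, by rw [h2]; ring⟩
    · right
      rw [hact] at h3
      exact ⟨by rw [h1]; exact (hf2 tb f1 v0 n).2.2, by rw [h2]; linarith⟩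

lemma isTrajectory2 (hB : 0 ≤ B) (hm : ∀ y, G.E y (m y))
    (hbid : ∀ y b e, 0 ≤ b → 0 ≤ bid y b e ∧ bid y b e ≤ b) (tb : TieBreak V) {f1 : Strat V}
    (hf1 : Legal1 G f1 (1 - B)) (v0 : V) {f2 : Strat V}
    (hf2 : f2 = stationary w B Hist.pay2 bid m) :
    G.IsTrajectory m (visit tb f1 f2 v0) (fun n => B - (play tb f1 f2 v0 n).pay2)
      (fun n => bid (visit tb f1 f2 v0 n) (B - (play tb f1 f2 v0 n).pay2)
        (energy w tb f1 f2 v0 n + w (visit tb f1 f2 v0 n))) where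
  E_move := hm
  budget_nonneg n := by subst hf2; exact budget2_nonneg hB hbid tb f1 v0 n
  budget_le_one n := by
    have h := hf1 tb f2 v0 n
    have h1 := h.1.trans h.2.1
    simp only [Hist.pay2]
    linarith
  step n := by
    have hact : f2 (play tb f1 f2 v0 n) = (bid (visit tb f1 f2 v0 n)
        (B - (play tb f1 f2 v0 n).pay2)
        (energy w tb f1 f2 v0 n + w (visit tb f1 f2 v0 n)), m (visit tb f1 f2 v0 n)) := by
      rw [← energyAll_play, hf2]; rfl
    rcases play_succ_cases tb f1 f2 v0 n with ⟨h1, h2, h3⟩ | ⟨h1, h2, -⟩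
    · right
      rw [hact] at h3
      exact ⟨by rw [h1]; exact (hf1 tb f2 v0 n).2.2, by
        simp only [Hist.pay2] at h3 ⊢; rw [h2]; linarith⟩
    · left
      rw [hact] at h1 h2
      exact ⟨h1, by simp only [Hist.pay2] at h2 ⊢; rw [h2]; ring⟩

lemma exists_abs_energy_div_le (w : V → ℤ) (tb : TieBreak V) (f1 f2 : Strat V) (v0 : V) :
    ∃ M : ℝ, ∀ n : ℕ, |(energy w tb f1 f2 v0 n : ℝ) / n| ≤ M := by
  obtain ⟨M, hM⟩ := Finite.exists_le fun y => |(w y : ℝ)|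
  have hM0 : 0 ≤ M := (abs_nonneg _).trans (hM v0)
  refine ⟨M, fun n => ?_⟩
  rw [abs_div, Nat.abs_cast]
  refine div_le_of_le_mul₀ n.cast_nonneg hM0 ?_
  rw [energy]
  push_cast
  refine (Finset.abs_sum_le_sum_abs _ _).trans ((Finset.sum_le_sum fun i _ => hM _).trans ?_)
  simp [mul_comm]

lemma mpval_nonpos_of_frequently_energy_le {tb : TieBreak V} {f1 f2 : Strat V} {v0 : V} {c : ℝ}
    (h : ∃ᶠ n in Filter.atTop, (energy w tb f1 f2 v0 n : ℝ) ≤ c) :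
    mpval w tb f1 f2 v0 ≤ 0 := by
  obtain ⟨M, hM⟩ := exists_abs_energy_div_le w tb f1 f2 v0
  refine le_of_forall_pos_le_add fun ε hε => ?_
  rw [zero_add]
  refine Filter.liminf_le_of_frequently_le ?_
    (Filter.isBoundedUnder_of ⟨-M, fun n => neg_le_of_abs_le (hM n)⟩)
  obtain ⟨k, hk⟩ := exists_nat_gt (c / ε)
  refine (h.and_eventually (Filter.eventually_ge_atTop (max k 1))).mono fun n hn => ?_
  have hn1 : (0 : ℝ) < n := by exact_mod_cast (le_max_right k 1).trans hn.2
  have hkn : (k : ℝ) ≤ n := by exact_mod_cast (le_max_left k 1).trans hn.2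
  rw [div_le_iff₀ hn1]
  rw [div_lt_iff₀ hε] at hk
  nlinarith [hn.1]

lemma mpval_pos_of_linear_energy {tb : TieBreak V} {f1 f2 : Strat V} {v0 : V} {δ c : ℝ} {N : ℕ}
    (hδ : 0 < δ) (h : ∀ n ≥ N, δ * n - c ≤ (energy w tb f1 f2 v0 n : ℝ)) :
    0 < mpval w tb f1 f2 v0 := by
  obtain ⟨M, hM⟩ := exists_abs_energy_div_le w tb f1 f2 v0
  refine (half_pos hδ).trans_le (Filter.le_liminf_of_le
    (Filter.IsBoundedUnder.isCoboundedUnder_ge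
      (Filter.isBoundedUnder_of ⟨M, fun n => le_of_abs_le (hM n)⟩)) ?_)
  obtain ⟨k, hk⟩ := exists_nat_gt (c / (δ / 2))
  refine (Filter.eventually_ge_atTop (max N (max k 1))).mono fun n hn => ?_
  have hn1 : (0 : ℝ) < n := by
    exact_mod_cast (le_max_right k 1).trans ((le_max_right N _).trans hn)
  have hkn : (k : ℝ) ≤ n := by
    exact_mod_cast (le_max_left k 1).trans ((le_max_right N _).trans hn)
  rw [le_div_iff₀ hn1]
  rw [div_lt_iff₀ (half_pos hδ)] at hk
  nlinarith [h n ((le_max_left N _).trans hn)]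

end Plays

/-! ### The Richman value bounds both players -/

namespace BiddingGame

variable {V : Type} [Fintype V] {G : BiddingGame V} {w : V → ℤ}

lemma recurrent_closed : ∀ y ∈ G.recurrent, ∀ z, G.E y z → z ∈ G.recurrent := fun _ hy _ hz =>
  recurrent_of_mem_cone hy (Relation.ReflTransGen.single hz)

/-- Max wins with any budget exceeding `1 - R v`. -/
lemma exists_max_winning {R : V → ℝ} (hR01 : ∀ x, 0 ≤ R x ∧ R x ≤ 1)
    (hR : ∀ x ∉ G.recurrent, G.avg R x = R x)
    (hRmin : ∀ x ∈ G.minRecurrent fun x => (w x : ℝ), R x = 0) (v : V) {B : ℝ}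
    (hB : 1 - R v < B) (tb : TieBreak V) :
    ∃ f2 : Strat V, Legal2 G f2 B ∧
      ∀ f1 : Strat V, Legal1 G f1 (1 - B) → 0 < mpval w tb f1 f2 v := by
  have hR' : ∀ x ∉ G.recurrent, G.avg (fun y => -R y + 1) x = -R x + 1 := fun x hx => by
    rw [avg_add_const, avg_neg, hR x hx]
  obtain ⟨g, μ, hμ, hgR, hg⟩ :=
    exists_strict_supersolution hR' (ε := (B - (1 - R v)) / 2) (by linarith)
  obtain ⟨W, δ, hδ, hW⟩ := G.exists_max_potential fun x => (w x : ℝ)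
  have hg0 : ∀ y, 0 ≤ g y := fun y => by linarith [(hgR y).1, (hR01 y).2]
  have hB0 : 0 ≤ B := by linarith [(hR01 v).2]
  obtain ⟨M, hM⟩ := Finite.exists_le fun y => G.gap W y ^ 2 / 2
  have hM0 : 0 ≤ M := (by positivity : 0 ≤ G.gap W v ^ 2 / 2).trans (hM v)
  set η := δ / 2 / (M + 1)
  have hη : 0 < η := by positivity
  have hηδ : ∀ y, η * G.gap W y ^ 2 / 2 ≤ δ / 2 := fun y => by
    have h1 : η * (M + 1) = δ / 2 := div_mul_cancel₀ _ (by positivity)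
    have h2 := mul_le_mul_of_nonneg_left (hM y) hη.le
    linarith
  let m : V → V := fun y => if y ∈ G.recurrent then G.argmin W y else G.argmin g y
  let bid : V → ℝ → ℤ → ℝ := fun y b _ => if y ∈ G.recurrent then
    b * (1 - Real.exp (-(η * (G.gap W y + δ / 2)))) else min b (G.gap g y)
  have hm : ∀ y, G.E y (m y) := fun y => by
    simp only [m]; split_ifs <;> exact E_argmin _ _
  have hbid : ∀ y b e, 0 ≤ b → 0 ≤ bid y b e ∧ bid y b e ≤ b := by
    intro y b e hb
    simp only [bid]
    split_ifs
    · have h1 := Real.exp_pos (-(η * (G.gap W y + δ / 2)))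
      have h2 : Real.exp (-(η * (G.gap W y + δ / 2))) ≤ 1 := by
        rw [Real.exp_le_one_iff, neg_nonpos]
        have := gap_nonneg (G := G) W y
        positivity
      constructor <;> nlinarith
    · exact ⟨le_min hb (gap_nonneg g y), min_le_left _ _⟩
  refine ⟨_, legal2_stationary (w := w) hB0 hm hbid, fun f1 hf1 => ?_⟩
  have htraj := isTrajectory2 (w := w) hB0 hm hbid tb hf1 v rfl
  obtain ⟨N, hN, hbN⟩ := htraj.exists_visit_recurrent hμ hg0 hg
    (fun y hy => by simp only [m, if_neg hy]) (fun n hn => by simp only [bid, if_neg hn])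
    (by
      have := (hgR v).2
      simp only [visit, play, Hist.cur, Hist.pay2, Hist.pay1]
      simp only [List.getLast?_nil, Option.elim_none, List.map_nil, List.sum_nil]
      linarith)
  obtain ⟨c, hc⟩ := htraj.exists_linear_energy
    (S := G.recurrent \ G.minRecurrent fun x => (w x : ℝ)) (w := fun x => (w x : ℝ))
    (W := W) (δ := δ / 2)
    (e := fun n => (energy w tb f1 (stationary w B Hist.pay2 bid m) v n : ℝ))
    (fun y hy z hz => ⟨recurrent_closed y hy.1 z hz, fun h =>
      hy.2 ((minRecurrent_iff_of_E hy.1 hz).1 h)⟩)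
    (fun y hy => by linarith [hW y hy]) (fun y hy => by simp only [m, if_pos hy.1])
    (energy_succ w _ _ _ _) hη hηδ (fun n hn => by simp only [bid, if_pos hn.1]) (N := N)
    ⟨hN, fun h => by
      linarith [hRmin _ h, (hgR _).1.trans_lt hbN, htraj.budget_le_one N]⟩
    ((hg0 _).trans_lt hbN)
  exact mpval_pos_of_linear_energy (half_pos hδ) hc

/-- Min wins with any budget exceeding `R v`, by a memoryless strategy. -/
lemma exists_min_winning {R : V → ℝ} (hR01 : ∀ x, 0 ≤ R x ∧ R x ≤ 1)
    (hR : ∀ x ∉ G.recurrent, G.avg R x = R x)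
    (hRmax : ∀ x ∈ G.recurrent, x ∉ G.minRecurrent (fun x => (w x : ℝ)) → R x = 1) (v : V)
    {B : ℝ} (hB : R v < B) (tb : TieBreak V) :
    ∃ f1 : Strat V, MemorylessE w f1 ∧ Legal1 G f1 B ∧
      ∀ f2 : Strat V, Legal2 G f2 (1 - B) → mpval w tb f1 f2 v ≤ 0 := by
  obtain ⟨g, μ, hμ, hgR, hg⟩ :=
    exists_strict_supersolution hR (ε := (B - R v) / 2) (by linarith)
  obtain ⟨W, hW⟩ := G.exists_min_potential fun x => (w x : ℝ)
  have hg0 : ∀ y, 0 ≤ g y := fun y => by linarith [(hgR y).1, (hR01 y).1]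
  have hB0 : 0 ≤ B := by linarith [(hR01 v).1]
  obtain ⟨M, hM⟩ := Finite.exists_le fun y => G.gap W y
  have hK : ∀ y, G.gap W y < M + 1 := fun y => by linarith [hM y]
  have hK0 : 0 < M + 1 := (gap_nonneg W v).trans_lt (hK v)
  let m : V → V := fun y => if y ∈ G.recurrent then G.argmin W y else G.argmin g y
  let bid : V → ℝ → ℤ → ℝ := fun y b e => if y ∈ G.recurrent then
    (if M + 1 ≤ ((e - w y : ℤ) : ℝ) + W y then
      b * (G.gap W y / (((e - w y : ℤ) : ℝ) + W y)) else 0) else min b (G.gap g y)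
  have hm : ∀ y, G.E y (m y) := fun y => by
    simp only [m]; split_ifs <;> exact E_argmin _ _
  have hbid : ∀ y b e, 0 ≤ b → 0 ≤ bid y b e ∧ bid y b e ≤ b := by
    intro y b e hb
    simp only [bid]
    split_ifs with h1 h2
    · have hpos := hK0.trans_le h2
      have hgap := gap_nonneg (G := G) W y
      refine ⟨by positivity, mul_le_of_le_one_right hb ?_⟩
      rw [div_le_one hpos]
      exact (hK y).le.trans h2
    · exact ⟨le_rfl, hb⟩
    · exact ⟨le_min hb (gap_nonneg g y), min_le_left _ _⟩
  refine ⟨_, memorylessE_stationary w B bid m, legal1_stationary hB0 hm hbid, fun f2 hf2 => ?_⟩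
  have htraj := isTrajectory1 (w := w) hB0 hm hbid tb hf2 v rfl
  obtain ⟨N, hN, hbN⟩ := htraj.exists_visit_recurrent hμ hg0 hg
    (fun y hy => by simp only [m, if_neg hy]) (fun n hn => by simp only [bid, if_neg hn])
    (by
      have := (hgR v).2
      simp only [visit, play, Hist.cur, Hist.pay1]
      simp only [List.getLast?_nil, Option.elim_none, List.map_nil, List.sum_nil]
      linarith)
  obtain ⟨c, hc⟩ := htraj.exists_frequently_energy_le
    (S := G.minRecurrent fun x => (w x : ℝ)) (w := fun x => (w x : ℝ)) (W := W)
    (e := fun n => (energy w tb (stationary w B Hist.pay1 bid m) f2 v n : ℝ))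
    (fun y hy z hz => (minRecurrent_iff_of_E hy.1 hz).2 hy) hW
    (fun y hy => by simp only [m, if_pos hy.1]) (energy_succ w _ _ _ _) hK
    (fun n hn => by simp only [bid, if_pos hn.1, add_sub_cancel_right]) (N := N)
    (by
      by_contra h
      linarith [hRmax _ hN h, (hgR _).1.trans_lt hbN, htraj.budget_le_one N])
    ((hg0 _).trans_lt hbN)
  exact mpval_nonpos_of_frequently_energy_le hc

end BiddingGame

/-- In a mean-payoff bidding game, if Min's initial budget exceeds the
threshold budget `Thresh(v) = t`, then Min has a *memoryless* strategy (its bid and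
move depend only on the current vertex, Min's current budget, and the current energy
level) guaranteeing a nonpositive mean-payoff value from `v`. -/
theorem mp_min_memoryless_optimal
    {V : Type} [Fintype V] (G : BiddingGame V) (w : V → ℤ) (v : V) (t : ℝ)
    (ht : IsThreshMP G w v t) (B : ℝ) (hB1 : B ≤ 1) (hB : t < B)
    (tb : TieBreak V) :
    ∃ f1 : Strat V, MemorylessE w f1 ∧ Legal1 G f1 B ∧
      ∀ f2 : Strat V, Legal2 G f2 (1 - B) → mpval w tb f1 f2 v ≤ 0 := by
  obtain ⟨R, hR01, hR, hRrec⟩ := G.exists_harmonic (G.minRecurrent fun x => (w x : ℝ))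
  have hRt : R v ≤ t := by
    by_contra! hlt
    have hB' : (t + R v) / 2 ≤ 1 := by linarith [(hR01 v).2]
    obtain ⟨f1, hf1, hwin⟩ := ht.1 ((t + R v) / 2) hB' (by linarith) tb
    obtain ⟨f2, hf2, hpos⟩ := BiddingGame.exists_max_winning (G := G) (w := w) hR01 hR
      (fun x hx => by rw [hRrec x hx.1, if_pos hx]) v (B := 1 - (t + R v) / 2) (by linarith) tb
    exact (hwin f2 hf2).not_gt (hpos f1 (by rwa [sub_sub_cancel]))
  exact BiddingGame.exists_min_winning hR01 hR
    (fun x hx hx' => by rw [hRrec x hx, if_neg hx']) v (hRt.trans_lt hB) tb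
end

section
/- Consider a mean-payoff bidding game G = (V, E, w) and a vertex v ∈ V. If Max's initial budget exceeds 1 − Thresh(v), then Max has a constant-memory strategy that guarantees a strictly positive mean-payoff value from v, that is, a strategy whose bid and chosen move at each round depend only on the current vertex, Max's current budget, the current energy level, and a memory state ranging over a finite set whose size is independent of the history. -/
open scoped Classical

/-! ### Bookkeeping along histories -/

/-- The history extended by one more round. -/
def Hist.snoc {V : Type} (h : Hist V) (r : BidRound V) : Hist V := ⟨h.init, h.rounds ++ [r]⟩

@[simp] lemma Hist.cur_snoc {V : Type} (h : Hist V) (r : BidRound V) :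
    (h.snoc r).cur = r.dest := by
  simp [Hist.cur, Hist.snoc]

@[simp] lemma Hist.pay1_snoc {V : Type} (h : Hist V) (r : BidRound V) :
    (h.snoc r).pay1 = h.pay1 + if r.p1Won then r.bid else -r.bid := by
  simp [Hist.pay1, Hist.snoc]

@[simp] lemma Hist.length_snoc {V : Type} (h : Hist V) (r : BidRound V) :
    (h.snoc r).rounds.length = h.rounds.length + 1 := by
  simp [Hist.snoc]

/-- The sum of the weights of all vertices visited before the current one. -/
def Hist.energyPast {V : Type} (w : V → ℤ) (h : Hist V) : ℤ := h.energyAll w - w h.cur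

@[simp] lemma Hist.energyPast_snoc {V : Type} (w : V → ℤ) (h : Hist V) (r : BidRound V) :
    (h.snoc r).energyPast w = h.energyPast w + w h.cur := by
  simp only [Hist.energyPast, Hist.cur_snoc]
  simp [Hist.energyAll, Hist.snoc]
  ring

lemma extend_of_p1 {V : Type} {tb : TieBreak V} {f1 f2 : Strat V} {h : Hist V}
    (hw : (f2 h).1 < (f1 h).1 ∨ ((f1 h).1 = (f2 h).1 ∧ tb h = true)) :
    extend tb f1 f2 h = h.snoc ⟨(f1 h).2, (f1 h).1, true⟩ := by
  rw [extend, if_pos hw]; rfl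

lemma extend_of_p2 {V : Type} {tb : TieBreak V} {f1 f2 : Strat V} {h : Hist V}
    (hw : ¬ ((f2 h).1 < (f1 h).1 ∨ ((f1 h).1 = (f2 h).1 ∧ tb h = true))) :
    extend tb f1 f2 h = h.snoc ⟨(f2 h).2, (f2 h).1, false⟩ := by
  rw [extend, if_neg hw]; rfl

lemma extend_cases {V : Type} (tb : TieBreak V) (f1 f2 : Strat V) (h : Hist V) :
    ((f2 h).1 ≤ (f1 h).1 ∧ extend tb f1 f2 h = h.snoc ⟨(f1 h).2, (f1 h).1, true⟩) ∨
    ((f1 h).1 ≤ (f2 h).1 ∧ extend tb f1 f2 h = h.snoc ⟨(f2 h).2, (f2 h).1, false⟩) := by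
  by_cases hw : (f2 h).1 < (f1 h).1 ∨ ((f1 h).1 = (f2 h).1 ∧ tb h = true)
  · refine Or.inl ⟨?_, extend_of_p1 hw⟩
    rcases hw with hw | hw
    · exact hw.le
    · exact hw.1.ge
  · refine Or.inr ⟨?_, extend_of_p2 hw⟩
    push Not at hw
    exact hw.1

@[simp] lemma length_extend {V : Type} (tb : TieBreak V) (f1 f2 : Strat V) (h : Hist V) :
    (extend tb f1 f2 h).rounds.length = h.rounds.length + 1 := by
  rcases extend_cases tb f1 f2 h with ⟨-, h'⟩ | ⟨-, h'⟩ <;> simp [h']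

@[simp] lemma energyPast_extend {V : Type} (w : V → ℤ) (tb : TieBreak V) (f1 f2 : Strat V)
    (h : Hist V) : (extend tb f1 f2 h).energyPast w = h.energyPast w + w h.cur := by
  rcases extend_cases tb f1 f2 h with ⟨-, h'⟩ | ⟨-, h'⟩ <;> simp [h']

lemma length_play {V : Type} (tb : TieBreak V) (f1 f2 : Strat V) (v0 : V) (n : ℕ) :
    (play tb f1 f2 v0 n).rounds.length = n := by
  induction n with
  | zero => rfl
  | succ n ih => simp [play, ih]

lemma energyPast_play {V : Type} (w : V → ℤ) (tb : TieBreak V) (f1 f2 : Strat V) (v0 : V)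
    (n : ℕ) : (play tb f1 f2 v0 n).energyPast w = energy w tb f1 f2 v0 n := by
  induction n with
  | zero => simp [play, Hist.energyPast, Hist.energyAll, Hist.cur, energy]
  | succ n ih => simp [play, ih, energy, Finset.sum_range_succ, visit]

lemma exists_weight_bound {V : Type} [Fintype V] (w : V → ℤ) :
    ∃ W : ℝ, 0 ≤ W ∧ ∀ v, |(w v : ℝ)| ≤ W :=
  ⟨∑ v, |(w v : ℝ)|, Finset.sum_nonneg fun _ _ => abs_nonneg _, fun v =>
    Finset.single_le_sum (f := fun v => |(w v : ℝ)|) (fun _ _ => abs_nonneg _)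
      (Finset.mem_univ v)⟩

lemma abs_energy_le {V : Type} {w : V → ℤ} {W : ℝ} (hW : ∀ v, |(w v : ℝ)| ≤ W)
    (tb : TieBreak V) (f1 f2 : Strat V) (v0 : V) (n : ℕ) :
    |(energy w tb f1 f2 v0 n : ℝ)| ≤ n * W := by
  rw [energy, Int.cast_sum]
  refine (Finset.abs_sum_le_sum_abs _ _).trans ?_
  refine (Finset.sum_le_sum fun i _ => hW _).trans ?_
  simp

lemma abs_energy_div_le {V : Type} {w : V → ℤ} {W : ℝ} (hW0 : 0 ≤ W)
    (hW : ∀ v, |(w v : ℝ)| ≤ W) (tb : TieBreak V) (f1 f2 : Strat V) (v0 : V) (n : ℕ) :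
    |(energy w tb f1 f2 v0 n : ℝ) / n| ≤ W := by
  rcases Nat.eq_zero_or_pos n with rfl | hn
  · simpa using hW0
  · have hn' : (0 : ℝ) < n := by exact_mod_cast hn
    rw [abs_div, abs_of_pos hn', div_le_iff₀ hn', mul_comm]
    exact abs_energy_le hW tb f1 f2 v0 n

lemma mpval_pos_of_linear_lower_bound {V : Type} [Fintype V] {w : V → ℤ} {tb : TieBreak V}
    {f1 f2 : Strat V} {v0 : V} {c C : ℝ} (hc : 0 < c)
    (h : ∀ n : ℕ, c * n - C ≤ energy w tb f1 f2 v0 n) : 0 < mpval w tb f1 f2 v0 := by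
  obtain ⟨W, hW0, hW⟩ := exists_weight_bound w
  refine lt_of_lt_of_le (half_pos hc) ?_
  refine Filter.le_liminf_of_le ?_ ?_
  · exact (Filter.isBoundedUnder_of ⟨W, fun n =>
      (abs_le.1 (abs_energy_div_le hW0 hW tb f1 f2 v0 n)).2⟩).isCoboundedUnder_ge
  · obtain ⟨N, hN⟩ := exists_nat_gt (C / (c / 2))
    filter_upwards [Filter.eventually_ge_atTop (N + 1)] with n hn
    have hn' : (N : ℝ) + 1 ≤ n := by exact_mod_cast hn
    have hn0 : (0 : ℝ) < n := by
      have : (0 : ℝ) ≤ N := N.cast_nonneg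
      linarith
    rw [le_div_iff₀ hn0]
    rw [div_lt_iff₀ (half_pos hc)] at hN
    have := h n
    nlinarith

lemma mpval_nonpos_of_frequently {V : Type} [Fintype V] {w : V → ℤ} {tb : TieBreak V}
    {f1 f2 : Strat V} {v0 : V}
    (h : ∀ k : ℕ, ∃ n : ℕ, k ≤ n ∧ (energy w tb f1 f2 v0 n : ℝ) ≤ (n : ℝ) / (k + 1)) :
    mpval w tb f1 f2 v0 ≤ 0 := by
  obtain ⟨W, hW0, hW⟩ := exists_weight_bound w
  refine le_of_forall_pos_le_add fun ε hε => ?_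
  rw [zero_add]
  refine Filter.liminf_le_of_frequently_le ?_ (Filter.isBoundedUnder_of ⟨-W, fun n =>
      (abs_le.1 (abs_energy_div_le hW0 hW tb f1 f2 v0 n)).1⟩)
  rw [Filter.frequently_atTop]
  intro m
  obtain ⟨K, hK⟩ := exists_nat_one_div_lt hε
  obtain ⟨n, hn, hE⟩ := h (max (m + 1) K)
  refine ⟨n, by omega, ?_⟩
  have hn0 : (0 : ℝ) < n := by
    have : 0 < n := by omega
    exact_mod_cast this
  rw [div_le_iff₀ hn0]
  refine hE.trans ?_
  rw [div_eq_mul_one_div, mul_comm]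
  refine mul_le_mul_of_nonneg_right (le_trans ?_ hK.le) hn0.le
  refine one_div_le_one_div_of_le (by positivity) ?_
  have : (K : ℝ) ≤ ((max (m + 1) K : ℕ) : ℝ) := by exact_mod_cast le_max_right _ _
  linarith

/-! ### Legality -/

lemma legal1_of_forall {V : Type} [Fintype V] {G : BiddingGame V} {f1 : Strat V} {B : ℝ}
    (hB : 0 ≤ B) (h0 : ∀ h, 0 ≤ (f1 h).1)
    (h1 : ∀ h : Hist V, 0 ≤ B - h.pay1 → (f1 h).1 ≤ B - h.pay1)
    (hE : ∀ h : Hist V, G.E h.cur (f1 h).2) : Legal1 G f1 B := by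
  intro tb f2 v0 n
  have key : 0 ≤ B - (play tb f1 f2 v0 n).pay1 := by
    induction n with
    | zero => simpa [play, Hist.pay1] using hB
    | succ n ih =>
      have a := h0 (play tb f1 f2 v0 n)
      have b := h1 _ ih
      rw [play]
      rcases extend_cases tb f1 f2 (play tb f1 f2 v0 n) with ⟨_, e⟩ | ⟨_, e⟩ <;>
        (rw [e]; simp; linarith)
  exact ⟨h0 _, h1 _ key, hE _⟩

lemma legal2_of_forall {V : Type} [Fintype V] {G : BiddingGame V} {f2 : Strat V} {B : ℝ}
    (hB : 0 ≤ B) (h0 : ∀ h, 0 ≤ (f2 h).1)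
    (h1 : ∀ h : Hist V, 0 ≤ B - h.pay2 → (f2 h).1 ≤ B - h.pay2)
    (hE : ∀ h : Hist V, G.E h.cur (f2 h).2) : Legal2 G f2 B := by
  intro tb f1 v0 n
  have key : 0 ≤ B - (play tb f1 f2 v0 n).pay2 := by
    induction n with
    | zero => simpa [play, Hist.pay1, Hist.pay2] using hB
    | succ n ih =>
      have a := h0 (play tb f1 f2 v0 n)
      have b := h1 _ ih
      rw [play]
      rw [Hist.pay2] at b ⊢
      rcases extend_cases tb f1 f2 (play tb f1 f2 v0 n) with ⟨_, e⟩ | ⟨_, e⟩ <;>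
        (rw [e]; simp; linarith)
  exact ⟨h0 _, h1 _ key, hE _⟩

/-! ### Energy-safe positions -/

/-- A set `X` of triples (vertex, budget of Max, energy) is invariant for the weights
`w - δ` if energies in `X` are nonnegative and Max can keep the token inside `X` for one
more round. -/
def SafeInvariant {V : Type} [Fintype V] (G : BiddingGame V) (w : V → ℤ) (δ : ℝ)
    (X : V → ℝ → ℝ → Prop) : Prop :=
  ∀ u B x, X u B x → 0 ≤ x ∧ ∃ (b : ℝ) (u' : V), 0 ≤ b ∧ b ≤ B ∧ G.E u u' ∧
    X u' (B - b) (x + w u - δ) ∧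
    ∀ (b' : ℝ) (z : V), b ≤ b' → b' ≤ 1 - B → G.E u z → X z (B + b') (x + w u - δ)

/-- Max can keep the energy with respect to `w - δ` nonnegative forever. -/
def Safe {V : Type} [Fintype V] (G : BiddingGame V) (w : V → ℤ) (δ : ℝ)
    (u : V) (B x : ℝ) : Prop :=
  ∃ X, SafeInvariant G w δ X ∧ X u B x

lemma safeInvariant_safe {V : Type} [Fintype V] (G : BiddingGame V) (w : V → ℤ) (δ : ℝ) :
    SafeInvariant G w δ (Safe G w δ) := by
  rintro u B x ⟨X, hX, hx⟩
  obtain ⟨h0, b, u', hb0, hbB, hE, h1, h2⟩ := hX u B x hx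
  exact ⟨h0, b, u', hb0, hbB, hE, ⟨X, hX, h1⟩, fun b' z hb hb' hz =>
    ⟨X, hX, h2 b' z hb hb' hz⟩⟩

lemma Safe.mono {V : Type} [Fintype V] {G : BiddingGame V} {w : V → ℤ} {δ δ' : ℝ}
    {u : V} {B B' x x' : ℝ} (h : Safe G w δ u B x) (hδ : δ' ≤ δ) (hB : B ≤ B')
    (hx : x ≤ x') : Safe G w δ' u B' x' := by
  obtain ⟨X, hX, h⟩ := h
  refine ⟨fun u B' x' => ∃ B x, B ≤ B' ∧ x ≤ x' ∧ X u B x, ?_, B, x, hB, hx, h⟩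
  rintro u B' x' ⟨B, x, hB, hx, h⟩
  obtain ⟨h0, b, u', hb0, hbB, hE, h1, h2⟩ := hX u B x h
  refine ⟨h0.trans hx, b, u', hb0, hbB.trans hB, hE, ⟨_, _, ?_, ?_, h1⟩, ?_⟩
  · linarith
  · linarith
  · intro b' z hb hb' hz
    exact ⟨_, _, by linarith, by linarith, h2 b' z hb (by linarith) hz⟩

/-- At every larger budget the position is safe for some positive drift and some initial
energy. -/
def NearSafe {V : Type} [Fintype V] (G : BiddingGame V) (w : V → ℤ) (u : V) (B : ℝ) : Prop :=
  ∀ η > 0, B + η ≤ 1 → ∃ δ > 0, ∃ x, Safe G w δ u (B + η) x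

lemma NearSafe.uniform_at {V : Type} [Fintype V] (G : BiddingGame V) (w : V → ℤ) (u : V)
    {η : ℝ} (hη : 0 < η) : ∃ δ > 0, ∃ x, ∀ B, 0 ≤ B → B + η ≤ 1 → NearSafe G w u B →
      Safe G w δ u (B + η) x := by
  set S : Set ℝ := {B | 0 ≤ B ∧ B + η ≤ 1 ∧ NearSafe G w u B} with hS
  by_cases hne : S.Nonempty
  · have hbdd : BddBelow S := ⟨0, fun B hB => hB.1⟩
    obtain ⟨B₁, hB₁, hlt⟩ := exists_lt_of_csInf_lt hne
      (show sInf S < sInf S + η / 2 by linarith)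
    obtain ⟨δ, hδ, x, hx⟩ := hB₁.2.2 (η / 2) (by linarith) (by linarith [hB₁.2.1])
    refine ⟨δ, hδ, x, fun B hB0 hB1 hB => hx.mono le_rfl ?_ le_rfl⟩
    have := csInf_le hbdd (show B ∈ S from ⟨hB0, hB1, hB⟩)
    linarith
  · exact ⟨1, one_pos, 0, fun B hB0 hB1 hB => (hne ⟨B, hB0, hB1, hB⟩).elim⟩

lemma NearSafe.uniform {V : Type} [Fintype V] (G : BiddingGame V) (w : V → ℤ)
    {η δ₀ : ℝ} (hη : 0 < η) (hδ₀ : 0 < δ₀) : ∃ δ > 0, δ ≤ δ₀ ∧ ∃ x₀, ∀ u B x, x₀ ≤ x → 0 ≤ B →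
      B + η ≤ 1 → NearSafe G w u B → Safe G w δ u (B + η) x := by
  choose δ hδ x hx using fun u => NearSafe.uniform_at G w u hη
  have hfin : (insert δ₀ (Set.range δ)).Finite := (Set.finite_range δ).insert _
  obtain ⟨d, hd, hmin⟩ := Set.exists_min_image _ id hfin ⟨δ₀, Set.mem_insert _ _⟩
  obtain ⟨x₀, hx₀⟩ := (Set.finite_range x).bddAbove
  refine ⟨d, ?_, hmin δ₀ (Set.mem_insert _ _), x₀, fun u B y hy hB0 hB1 hB => ?_⟩
  · rcases hd with rfl | ⟨u, rfl⟩
    · exact hδ₀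
    · exact hδ u
  · exact (hx u B hB0 hB1 hB).mono (hmin _ (Set.mem_insert_of_mem _ ⟨u, rfl⟩)) le_rfl
      ((hx₀ ⟨u, rfl⟩).trans hy)

/-! ### Max wins from safe positions without memory -/

/-- Among the energies at which the position is safe, one that is minimal up to `δ / 2`. -/
lemma exists_safe_near_minimal {V : Type} [Fintype V] {G : BiddingGame V} {w : V → ℤ} {δ : ℝ}
    (hδ : 0 < δ) {u : V} {B x : ℝ} (h : Safe G w δ u B x) :
    ∃ y, Safe G w δ u B y ∧ ∀ z, Safe G w δ u B z → y ≤ z + δ / 2 := by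
  have hbdd : BddBelow {z | Safe G w δ u B z} :=
    ⟨0, fun z hz => (safeInvariant_safe G w δ u B z hz).1⟩
  obtain ⟨y, hy, hlt⟩ := exists_lt_of_csInf_lt (s := {z | Safe G w δ u B z}) ⟨x, h⟩
    (show sInf {z | Safe G w δ u B z} < sInf {z | Safe G w δ u B z} + δ / 2 by linarith)
  refine ⟨y, hy, fun z hz => ?_⟩
  have := csInf_le hbdd hz
  linarith

/-- An action for Max at a position, optimal up to `δ / 2` whenever the position is safe. -/
lemma exists_safe_action {V : Type} [Fintype V] (G : BiddingGame V) (w : V → ℤ) {δ : ℝ}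
    (hδ : 0 < δ) (u : V) (B : ℝ) :
    ∃ a : ℝ × V, 0 ≤ a.1 ∧ (0 ≤ B → a.1 ≤ B) ∧ G.E u a.2 ∧
      ∀ x, Safe G w δ u B x → Safe G w δ a.2 (B - a.1) (x + w u - δ / 2) ∧
        ∀ (b' : ℝ) (z : V), a.1 ≤ b' → b' ≤ 1 - B → G.E u z →
          Safe G w δ z (B + b') (x + w u - δ / 2) := by
  by_cases h : ∃ x, Safe G w δ u B x
  · obtain ⟨x, hx⟩ := h
    obtain ⟨y, hy, hmin⟩ := exists_safe_near_minimal hδ hx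
    obtain ⟨_, b, u', hb0, hbB, hE, h1, h2⟩ := safeInvariant_safe G w δ u B y hy
    refine ⟨(b, u'), hb0, fun _ => hbB, hE, fun z hz => ?_⟩
    have := hmin z hz
    exact ⟨h1.mono le_rfl le_rfl (by linarith), fun b' v hb hb' hv =>
      (h2 b' v hb hb' hv).mono le_rfl le_rfl (by linarith)⟩
  · obtain ⟨u', hu'⟩ := G.total u
    exact ⟨(0, u'), le_rfl, id, hu', fun x hx => (h ⟨x, hx⟩).elim⟩

lemma exists_finiteMemory_of_safe {V : Type} [Fintype V] {G : BiddingGame V} {w : V → ℤ}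
    {δ : ℝ} (hδ : 0 < δ) {v : V} {B x₀ : ℝ} (hB : 0 ≤ B) (hs : Safe G w δ v B x₀)
    (tb : TieBreak V) :
    ∃ f2 : Strat V, FiniteMemory2 w f2 B ∧ Legal2 G f2 B ∧
      ∀ f1 : Strat V, Legal1 G f1 (1 - B) → 0 < mpval w tb f1 f2 v := by
  choose a ha0 haB haE ha using exists_safe_action G w hδ
  refine ⟨fun h => a h.cur (B - h.pay2), ⟨Unit, inferInstance, (), fun m _ => m,
    fun u β _ _ => a u β, fun _ => rfl⟩,
    legal2_of_forall hB (fun _ => ha0 _ _) (fun _ => haB _ _) (fun _ => haE _ _), ?_⟩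
  intro f1 hf1
  set f2 : Strat V := fun h => a h.cur (B - h.pay2) with hf2
  have key : ∀ n : ℕ, Safe G w δ (play tb f1 f2 v n).cur (B - (play tb f1 f2 v n).pay2)
      (x₀ + (play tb f1 f2 v n).energyPast w - δ / 2 * n) := by
    intro n
    induction n with
    | zero => simpa [play, Hist.cur, Hist.pay2, Hist.pay1, Hist.energyPast, Hist.energyAll] using hs
    | succ n ih =>
      obtain ⟨hb0, hbB, hbE⟩ := hf1 tb f2 v n
      set h := play tb f1 f2 v n with hh
      obtain ⟨h1, h2⟩ := ha _ _ _ ih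
      have hp : play tb f1 f2 v (n + 1) = extend tb f1 f2 h := rfl
      rw [hp, energyPast_extend]
      rcases extend_cases tb f1 f2 h with ⟨hle, e⟩ | ⟨hle, e⟩
      · have := h2 (f1 h).1 (f1 h).2 hle (by rw [Hist.pay2]; linarith) hbE
        rw [e, Hist.cur_snoc]
        refine this.mono le_rfl ?_ ?_
        · simp [Hist.pay2]
          linarith
        · push_cast
          linarith
      · rw [e, Hist.cur_snoc]
        refine h1.mono le_rfl ?_ ?_
        · simp [Hist.pay2, hf2]
          linarith
        · push_cast
          linarith
  refine mpval_pos_of_linear_lower_bound (half_pos hδ) (C := x₀) fun n => ?_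
  have := (safeInvariant_safe G w δ _ _ _ (key n)).1
  rw [energyPast_play] at this
  linarith

/-! ### Min spoils every strategy of Max from positions that are not nearly safe -/

/-- The tie-breaking mechanism that favours Player 1. -/
def TieBreak.first {V : Type} : TieBreak V := fun _ => true

/-- The history after a round in which Player 1 chooses the action `a`, Player 2 follows `f2`,
and Player 1 wins ties. -/
noncomputable def Hist.reply {V : Type} (f2 : Strat V) (h : Hist V) (a : ℝ × V) : Hist V :=
  extend TieBreak.first (fun _ => a : Strat V) f2 h

lemma extend_first {V : Type} (f1 f2 : Strat V) (h : Hist V) :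
    extend TieBreak.first f1 f2 h = h.reply f2 (f1 h) := rfl

@[simp] lemma Hist.length_reply {V : Type} (f2 : Strat V) (h : Hist V) (a : ℝ × V) :
    (h.reply f2 a).rounds.length = h.rounds.length + 1 :=
  length_extend _ _ _ _

@[simp] lemma Hist.energyPast_reply {V : Type} (w : V → ℤ) (f2 : Strat V) (h : Hist V)
    (a : ℝ × V) : (h.reply f2 a).energyPast w = h.energyPast w + w h.cur :=
  energyPast_extend _ _ _ _ _

lemma Hist.reply_of_le {V : Type} {f2 : Strat V} {h : Hist V} {a : ℝ × V}
    (ha : (f2 h).1 ≤ a.1) : h.reply f2 a = h.snoc ⟨a.2, a.1, true⟩ :=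
  extend_of_p1 (f1 := (fun _ => a : Strat V)) (ha.lt_or_eq.imp id fun e => ⟨e.symm, rfl⟩)

/-- If Min bids `0` and copies the move of Max, then Max's bid is paid and his move made. -/
lemma Hist.reply_zero {V : Type} {f2 : Strat V} {h : Hist V} (hb : 0 ≤ (f2 h).1) :
    (h.reply f2 (0, (f2 h).2)).cur = (f2 h).2 ∧
    (h.reply f2 (0, (f2 h).2)).pay1 = h.pay1 - (f2 h).1 := by
  rcases extend_cases TieBreak.first (fun _ => (0, (f2 h).2) : Strat V) f2 h with
    ⟨hle, e⟩ | ⟨_, e⟩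
  · have : (f2 h).1 = 0 := le_antisymm hle hb
    rw [Hist.reply, e]; simp [this]
  · rw [Hist.reply, e]; simp; ring

/-- Histories arising when Player 2 plays `f2` from `v0` and Player 1 wins all ties. -/
def Consistent {V : Type} (f2 : Strat V) (v0 : V) (h : Hist V) : Prop :=
  ∃ f1 n, h = play TieBreak.first f1 f2 v0 n

lemma Consistent.reply {V : Type} {f2 : Strat V} {v0 : V} {h : Hist V}
    (hh : Consistent f2 v0 h) (a : ℝ × V) : Consistent f2 v0 (h.reply f2 a) := by
  obtain ⟨f1, n, rfl⟩ := hh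
  set g : Strat V := fun h => if h.rounds.length = n then a else f1 h with hg
  have key : ∀ m ≤ n, play TieBreak.first g f2 v0 m = play TieBreak.first f1 f2 v0 m := by
    intro m hm
    induction m with
    | zero => rfl
    | succ m ih =>
      have hgf : g (play TieBreak.first f1 f2 v0 m) = f1 (play TieBreak.first f1 f2 v0 m) := by
        simp only [hg, length_play]
        rw [if_neg (by omega)]
      rw [play, ih (by omega), play, extend_first, extend_first, hgf]
  refine ⟨g, n + 1, ?_⟩
  rw [play, key n le_rfl, extend_first]
  simp only [hg, length_play, if_true]

/-- One round against `f2` in which Min, with initial budget `1 - B` and winning ties,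
acts legally and reaches a position that is not nearly safe for Max. -/
def SpoilStep {V : Type} [Fintype V] (G : BiddingGame V) (w : V → ℤ) (f2 : Strat V) (B : ℝ)
    (h h' : Hist V) : Prop :=
  (∃ a : ℝ × V, 0 ≤ a.1 ∧ a.1 ≤ 1 - B - h.pay1 ∧ G.E h.cur a.2 ∧ h' = h.reply f2 a) ∧
    ¬ NearSafe G w h'.cur (B + h'.pay1)

lemma SpoilStep.length_eq {V : Type} [Fintype V] {G : BiddingGame V} {w : V → ℤ}
    {f2 : Strat V} {B : ℝ} {h h' : Hist V} (hs : SpoilStep G w f2 B h h') :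
    h'.rounds.length = h.rounds.length + 1 := by
  obtain ⟨⟨a, -, -, -, rfl⟩, -⟩ := hs
  simp

lemma Consistent.of_reach {V : Type} [Fintype V] {G : BiddingGame V} {w : V → ℤ}
    {f2 : Strat V} {B : ℝ} {v0 : V} {h h' : Hist V} (hh : Consistent f2 v0 h)
    (hr : Relation.ReflTransGen (SpoilStep G w f2 B) h h') : Consistent f2 v0 h' := by
  induction hr with
  | refl => exact hh
  | tail _ hs ih =>
    obtain ⟨⟨a, -, -, -, rfl⟩, -⟩ := hs
    exact ih.reply a

lemma Consistent.legal {V : Type} [Fintype V] {G : BiddingGame V} {f2 : Strat V} {B : ℝ}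
    (hf2 : Legal2 G f2 B) {v0 : V} {h : Hist V} (hh : Consistent f2 v0 h) :
    0 ≤ (f2 h).1 ∧ (f2 h).1 ≤ B + h.pay1 ∧ G.E h.cur (f2 h).2 := by
  obtain ⟨f1, n, rfl⟩ := hh
  simpa [Hist.pay2] using hf2 TieBreak.first f1 v0 n

lemma Consistent.abs_energyPast_le {V : Type} {w : V → ℤ} {W : ℝ}
    (hW : ∀ v, |(w v : ℝ)| ≤ W) {f2 : Strat V} {v0 : V} {h : Hist V}
    (hh : Consistent f2 v0 h) : |(h.energyPast w : ℝ)| ≤ h.rounds.length * W := by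
  obtain ⟨f1, n, rfl⟩ := hh
  rw [energyPast_play, length_play]
  exact abs_energy_le hW _ _ _ _ _

lemma exists_reach_low {V : Type} [Fintype V] {G : BiddingGame V} {w : V → ℤ}
    {f2 : Strat V} {B : ℝ} (hf2 : Legal2 G f2 B) {v0 : V} {h₀ : Hist V}
    (hh : Consistent f2 v0 h₀) (hbad : ¬ NearSafe G w h₀.cur (B + h₀.pay1))
    {δ₀ : ℝ} (hδ₀ : 0 < δ₀) (e : ℝ) :
    ∃ h, Relation.ReflTransGen (SpoilStep G w f2 B) h₀ h ∧
      (h.energyPast w : ℝ) - δ₀ * h.rounds.length < e := by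
  by_contra! hcon
  apply hbad
  intro η hη hη1
  obtain ⟨δ, hδ, hδle, x₀, hx₀⟩ := NearSafe.uniform G w hη hδ₀
  obtain ⟨W, hW0, hW⟩ := exists_weight_bound w
  set C : ℝ := |e| + |x₀| + W + δ with hC
  set level : Hist V → ℝ := fun h => (h.energyPast w : ℝ) - δ * h.rounds.length + C with hlevel
  refine ⟨δ, hδ, level h₀, fun u β x =>
    (∃ h, Relation.ReflTransGen (SpoilStep G w f2 B) h₀ h ∧ h.cur = u ∧ B + h.pay1 + η = β ∧
      β ≤ 1 ∧ level h = x) ∨ Safe G w δ u β x, ?_, Or.inl ⟨h₀, .refl, rfl, rfl, hη1, rfl⟩⟩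
  rintro u β x (⟨h, hr, rfl, rfl, hle, rfl⟩ | hs)
  · obtain ⟨hb0, hbB, hbE⟩ := Consistent.legal hf2 (hh.of_reach hr)
    have hlow : e + C ≤ level h := by
      have h1 := hcon h hr
      have : δ * (h.rounds.length : ℝ) ≤ δ₀ * h.rounds.length :=
        mul_le_mul_of_nonneg_right hδle (Nat.cast_nonneg _)
      simp only [hlevel]
      linarith
    have hwc := abs_le.1 (hW h.cur)
    have he := neg_abs_le e
    have hx := le_abs_self x₀
    -- Every continuation either stays outside the nearly safe positions or is safe.
    have step : ∀ a : ℝ × V, 0 ≤ a.1 → a.1 ≤ 1 - B - h.pay1 → G.E h.cur a.2 →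
        0 ≤ B + (h.reply f2 a).pay1 → B + (h.reply f2 a).pay1 + η ≤ 1 →
        (∃ h', Relation.ReflTransGen (SpoilStep G w f2 B) h₀ h' ∧
          h'.cur = (h.reply f2 a).cur ∧ B + h'.pay1 + η = B + (h.reply f2 a).pay1 + η ∧
          B + (h.reply f2 a).pay1 + η ≤ 1 ∧
          level h' = level h + w h.cur - δ) ∨
        Safe G w δ (h.reply f2 a).cur (B + (h.reply f2 a).pay1 + η)
          (level h + w h.cur - δ) := by
      intro a ha0 ha1 haE hp0 hp1
      by_cases hn : NearSafe G w (h.reply f2 a).cur (B + (h.reply f2 a).pay1)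
      · exact Or.inr (hx₀ _ _ _ (by linarith) hp0 hp1 hn)
      · refine Or.inl ⟨_, hr.tail ⟨⟨a, ha0, ha1, haE, rfl⟩, hn⟩, rfl, rfl, hp1, ?_⟩
        simp only [hlevel, Hist.energyPast_reply, Hist.length_reply]
        push_cast
        ring
    refine ⟨by linarith [abs_nonneg x₀], ?_⟩
    refine ⟨(f2 h).1, (f2 h).2, hb0, by linarith, hbE, ?_, fun b' z hb hb' hz => ?_⟩
    · obtain ⟨hc, hp⟩ := Hist.reply_zero (f2 := f2) (h := h) hb0
      have := step (0, (f2 h).2) le_rfl (by simp only; linarith) hbE (by rw [hp]; linarith)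
        (by rw [hp]; linarith)
      rwa [hc, hp, show B + (h.pay1 - (f2 h).1) + η = B + h.pay1 + η - (f2 h).1 by ring] at this
    · have hrep : h.reply f2 (b', z) = h.snoc ⟨z, b', true⟩ := Hist.reply_of_le hb
      have hp : (h.reply f2 (b', z)).pay1 = h.pay1 + b' := by rw [hrep]; simp
      have hc : (h.reply f2 (b', z)).cur = z := by rw [hrep]; simp
      have := step (b', z) (hb0.trans hb) (by simp only; linarith) hz
        (by rw [hp]; linarith) (by rw [hp]; linarith)
      rwa [hc, hp, show B + (h.pay1 + b') + η = B + h.pay1 + η + b' by ring] at this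
  · obtain ⟨h0, b, u', hb0, hbB, hE, h1, h2⟩ := safeInvariant_safe G w δ u β x hs
    exact ⟨h0, b, u', hb0, hbB, hE, Or.inr h1, fun b' z hb hb' hz =>
      Or.inr (h2 b' z hb hb' hz)⟩

/-- From `a`, some point of `P` can be reached in exactly `j` steps. -/
def ReachesIn {α : Type*} (R : α → α → Prop) (P : α → Prop) : ℕ → α → Prop
  | 0, a => P a
  | j + 1, a => ∃ b, R a b ∧ ReachesIn R P j b

lemma exists_reachesIn_of_transGen {α : Type*} {R : α → α → Prop} {P : α → Prop} {a b : α}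
    (h : Relation.TransGen R a b) (hb : P b) : ∃ j, ReachesIn R P (j + 1) a := by
  induction h using Relation.TransGen.head_induction_on with
  | single h => exact ⟨0, b, h, hb⟩
  | head h _ ih =>
    obtain ⟨j, hj⟩ := ih
    exact ⟨j + 1, _, h, hj⟩

/-- If every `P k` remains reachable, then some infinite path visits all of them. -/
lemma exists_path_visiting_all {α : Type*} {R : α → α → Prop} {P : ℕ → α → Prop} {a₀ : α}
    (h : ∀ k a, Relation.ReflTransGen R a₀ a → ∃ b, Relation.TransGen R a b ∧ P k b) :
    ∃ H : ℕ → α, H 0 = a₀ ∧ (∀ n, R (H n) (H (n + 1))) ∧ ∀ k, ∃ n, P k (H n) := by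
  have h' : ∀ k a, Relation.ReflTransGen R a₀ a → ∃ j, ReachesIn R (P k) (j + 1) a := by
    intro k a ha
    obtain ⟨b, hb, hP⟩ := h k a ha
    exact exists_reachesIn_of_transGen hb hP
  let S : Type _ := {s : α × ℕ × ℕ //
    Relation.ReflTransGen R a₀ s.1 ∧ ReachesIn R (P s.2.1) s.2.2 s.1}
  have next : ∀ s : S, ∃ s' : S, R s.1.1 s'.1.1 ∧
      (∀ j, s.1.2.2 = j + 1 → s'.1.2 = (s.1.2.1, j)) ∧
      (s.1.2.2 = 0 → s'.1.2.1 = s.1.2.1 + 1) := by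
    rintro ⟨⟨a, k, _ | j⟩, hr, hs⟩
    · obtain ⟨j, b, hab, hb⟩ := h' (k + 1) a hr
      exact ⟨⟨(b, k + 1, j), hr.tail hab, hb⟩, hab, by simp, by simp⟩
    · obtain ⟨b, hab, hb⟩ := hs
      exact ⟨⟨(b, k, j), hr.tail hab, hb⟩, hab, by simp, by simp⟩
  choose nx hR hdec hinc using next
  obtain ⟨j₀, hj₀⟩ := h' 0 a₀ .refl
  let s₀ : S := ⟨(a₀, 0, j₀ + 1), .refl, hj₀⟩
  let s : ℕ → S := fun n => nx^[n] s₀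
  have hs : ∀ n, s (n + 1) = nx (s n) := fun n => Function.iterate_succ_apply' nx n s₀
  have descend : ∀ j n, (s n).1.2.2 = j →
      ∃ m, (s m).1.2.1 = (s n).1.2.1 ∧ (s m).1.2.2 = 0 := by
    intro j
    induction j with
    | zero => exact fun n hn => ⟨n, rfl, hn⟩
    | succ j ih =>
      intro n hn
      have hd := hdec (s n) j hn
      rw [← hs] at hd
      obtain ⟨m, hm, hm0⟩ := ih (n + 1) (by rw [hd])
      exact ⟨m, by rw [hm, hd], hm0⟩
  have visits : ∀ k, ∃ n, (s n).1.2.1 = k ∧ (s n).1.2.2 = 0 := by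
    intro k
    induction k with
    | zero => exact descend _ 0 rfl
    | succ k ih =>
      obtain ⟨n, hn, hn0⟩ := ih
      have hi := hinc (s n) hn0
      rw [← hs, hn] at hi
      rw [← hi]
      exact descend _ (n + 1) rfl
  refine ⟨fun n => (s n).1.1, rfl, fun n => ?_, fun k => ?_⟩
  · simp only [hs]
    exact hR _
  · obtain ⟨n, hn, hn0⟩ := visits k
    have := (s n).2.2
    rw [hn, hn0] at this
    exact ⟨n, this⟩

lemma exists_spoiling_path {V : Type} [Fintype V] {G : BiddingGame V} {w : V → ℤ}
    {f2 : Strat V} {B : ℝ} (hf2 : Legal2 G f2 B) {v0 : V} (hbad : ¬ NearSafe G w v0 B) :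
    ∃ H : ℕ → Hist V, H 0 = ⟨v0, []⟩ ∧ (∀ n, SpoilStep G w f2 B (H n) (H (n + 1))) ∧
      ∀ k : ℕ, ∃ n, k ≤ (H n).rounds.length ∧
        ((H n).energyPast w : ℝ) ≤ ((H n).rounds.length : ℝ) / (k + 1) := by
  refine exists_path_visiting_all (P := fun k (h : Hist V) => k ≤ h.rounds.length ∧
    (h.energyPast w : ℝ) ≤ (h.rounds.length : ℝ) / (k + 1)) fun k h hr => ?_
  have hcons : Consistent f2 v0 ⟨v0, []⟩ := ⟨f2, 0, rfl⟩
  have hhbad : ¬ NearSafe G w h.cur (B + h.pay1) := by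
    rcases Relation.ReflTransGen.cases_tail hr with rfl | ⟨_, _, hs⟩
    · simpa [Hist.cur, Hist.pay1] using hbad
    · exact hs.2
  obtain ⟨W, hW0, hW⟩ := exists_weight_bound w
  have hδ : (0 : ℝ) < 1 / (k + 1) := by positivity
  obtain ⟨h', hr', hlow⟩ := exists_reach_low hf2 (hcons.of_reach hr) hhbad hδ
    (-((W + 1) * (k + h.rounds.length)))
  have habs := (abs_le.1 (((hcons.of_reach hr).of_reach hr').abs_energyPast_le hW)).1
  have hδ1 : (1 : ℝ) / (k + 1) ≤ 1 := by
    rw [div_le_one (by positivity)]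
    linarith [(Nat.cast_nonneg k : (0 : ℝ) ≤ k)]
  have hlen : k + h.rounds.length < h'.rounds.length := by
    have h1 : (1 : ℝ) / (k + 1) * h'.rounds.length ≤ 1 * h'.rounds.length :=
      mul_le_mul_of_nonneg_right hδ1 (Nat.cast_nonneg _)
    have h2 : (W + 1) * ((k + h.rounds.length : ℕ) : ℝ) < (W + 1) * (h'.rounds.length : ℝ) := by
      push_cast
      linarith
    exact_mod_cast lt_of_mul_lt_mul_left h2 (by linarith)
  refine ⟨h', ?_, by omega, ?_⟩
  · rcases Relation.reflTransGen_iff_eq_or_transGen.1 hr' with rfl | ht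
    · omega
    · exact ht
  · have : (0 : ℝ) ≤ (W + 1) * (k + h.rounds.length) := by positivity
    rw [div_eq_mul_one_div, mul_comm]
    linarith

/-- A position from which Max wins is nearly safe. -/
lemma nearSafe_of_maxWinsFrom {V : Type} [Fintype V] {G : BiddingGame V} {w : V → ℤ}
    {v0 : V} {B : ℝ} (hB : B ≤ 1) (hwin : MaxWinsFrom G w v0 B) : NearSafe G w v0 B := by
  by_contra hbad
  obtain ⟨f2, hf2, hwins⟩ := hwin TieBreak.first
  obtain ⟨H, hH0, hH, hlow⟩ := exists_spoiling_path hf2 hbad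
  choose a ha0 ha1 haE ha using fun n => (hH n).1
  choose u hu using G.total
  have hlen : ∀ n, (H n).rounds.length = n := by
    intro n
    induction n with
    | zero => simp [hH0]
    | succ n ih => rw [(hH n).length_eq, ih]
  let f1 : Strat V := fun h =>
    if h = H h.rounds.length then a h.rounds.length else (0, u h.cur)
  have hf1H : ∀ n, f1 (H n) = a n := by
    intro n
    simp only [f1, hlen, if_true]
  have hplay : ∀ n, play TieBreak.first f1 f2 v0 n = H n := by
    intro n
    induction n with
    | zero => rw [hH0]; rfl
    | succ n ih => rw [play, ih, extend_first, hf1H, ha]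
  have hcase : ∀ h, (∃ n, h = H n ∧ f1 h = a n) ∨ f1 h = (0, u h.cur) := by
    intro h
    by_cases hh : h = H h.rounds.length
    · exact Or.inl ⟨_, hh, if_pos hh⟩
    · exact Or.inr (if_neg hh)
  have hleg : Legal1 G f1 (1 - B) := by
    refine legal1_of_forall (by linarith) (fun h => ?_) (fun h hb => ?_) (fun h => ?_) <;>
      rcases hcase h with ⟨n, rfl, e⟩ | e <;> rw [e]
    · exact ha0 n
    · exact ha1 n
    · exact hb
    · exact haE n
    · exact hu _
  refine (hwins f1 hleg).not_ge (mpval_nonpos_of_frequently fun k => ?_)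
  obtain ⟨n, hn, hE⟩ := hlow k
  rw [hlen] at hn hE
  refine ⟨n, hn, ?_⟩
  rw [← energyPast_play, hplay]
  exact hE

/-- In a mean-payoff bidding game, if Max's initial budget exceeds
`1 - Thresh(v) = 1 - t`, then Max has a *constant-memory* strategy (its bid and move
depend only on the current vertex, Max's current budget, the current energy level, and
a memory state ranging over a finite set whose size is independent of the history)
guaranteeing a strictly positive mean-payoff value from `v`. -/
theorem mp_max_constant_memory_optimal
    {V : Type} [Fintype V] (G : BiddingGame V) (w : V → ℤ) (v : V) (t : ℝ)
    (ht : IsThreshMP G w v t) (B : ℝ) (hB1 : B ≤ 1) (hB : 1 - t < B)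
    (tb : TieBreak V) :
    ∃ f2 : Strat V, FiniteMemory2 w f2 B ∧ Legal2 G f2 B ∧
      ∀ f1 : Strat V, Legal1 G f1 (1 - B) → 0 < mpval w tb f1 f2 v := by
  obtain ⟨B', hB', hB'B⟩ := exists_between hB
  have hwin := ht.2 B' (hB'B.le.trans hB1) hB'
  have hB'0 : 0 ≤ B' := by
    obtain ⟨f2, hf2, -⟩ := hwin tb
    obtain ⟨h0, h1, -⟩ := hf2 tb f2 v 0
    simpa [play, Hist.pay2, Hist.pay1] using h0.trans h1
  obtain ⟨δ, hδ, x, hx⟩ := nearSafe_of_maxWinsFrom (hB'B.le.trans hB1) hwin (B - B')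
    (sub_pos.2 hB'B) (by linarith)
  rw [add_sub_cancel] at hx
  exact exists_finiteMemory_of_safe hδ (hB'0.trans hB'B.le) hx tb
end
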